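/- (Ershov–He) Let n ≥ 3 and let Γ be a finite index subgroup of Aut(F_n) such that the commutator subgroup [Γ,Γ] contains [IA_n, IA_n], the commutator subgroup of the group of IA-automorphisms. Then Γ has finite abelianization: the quotient Γ/[Γ,Γ] is a finite group. In particular, every group homomorphism Γ → (ℝ,+) is trivial. -/

import Mathlib

noncomputable section

/-- The free group of rank `n`. -/
abbrev FreeGrp (n : ℕ) : Type := FreeGroup (Fin n)

/-- The automorphism group `Aut(Fₙ)`. -/
abbrev AutF (n : ℕ) : Type := MulAut (FreeGrp n)

/-- The subgroup `IAₙ ≤ Aut(Fₙ)` of automorphisms acting trivially on the abelianization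
`Fₙ^{ab} ≅ ℤⁿ`, i.e. the kernel of the natural map `Aut(Fₙ) → Aut(ℤⁿ)`. -/
def IA (n : ℕ) : Subgroup (AutF n) where
  carrier := {e | ∀ x : FreeGrp n, Abelianization.of (e x) = Abelianization.of x}
  one_mem' := fun _ => rfl
  mul_mem' := by
    intro a b ha hb x
    have h : (a * b) x = a (b x) := rfl
    rw [h, ha (b x), hb x]
  inv_mem' := by
    intro a ha x
    have h := ha (a⁻¹ x)
    have h' : a (a⁻¹ x) = x := a.apply_symm_apply x
    rw [h'] at h
    exact h.symm

/-!
Let `f : Γ →* ℝ` be a homomorphism and let `m` be such that `x ^ m ∈ Γ` for all `x`. As `f` kills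
`[IAₙ, IAₙ]`, the map `x ↦ f (x ^ m)` is a homomorphism on `IAₙ`, invariant under conjugation by
`Γ`. Let `K_{ij}` be the partial conjugation `x_i ↦ x_j⁻¹ x_i x_j`. For distinct `i, j, k` the
transvection `R : x_i ↦ x_i x_k` commutes with `K_{jk}` and `R K_{ji} R⁻¹ = K_{ji} K_{jk}`;
comparing the values at `K_{ji}` and at its conjugate by a power of `R` lying in `Γ` shows that `f`
vanishes on `Γ ∩ M`, where `M` is the normal closure of the partial conjugations.

Modulo `M`, left and right transvections agree and satisfy the Steinberg relations. Inducing the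
translation action of `Γ` through `f` gives an affine isometric action of `Aut(Fₙ) / M` on a
finite-dimensional Euclidean space, with finite linear parts of the transvections. Grouping the
indices into three classes grades the Steinberg relations by the root system `A₂`, and, as in the
work of Ershov and Jaikin-Zapirain, minimising an energy over points fixed by the root subgroups
yields a common fixed point. Hence `f` vanishes on the intersection of `Γ` with the subgroup
generated by the transvections, which has finite index in `Aut(Fₙ)` by Nielsen reduction, and so
`f` is trivial. Finally `Γ` is finitely generated, so the absence of nontrivial real characters
makes its abelianization finite.
-/

namespace ErshovHe

section InnerProduct

variable {V : Type*} [NormedAddCommGroup V] [InnerProductSpace ℝ V]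

open Submodule

lemma norm_add_sq_le_of_orthogonal_inf {K L : Submodule ℝ V} [(K ⊓ L).HasOrthogonalProjection]
    (hKL : L ⊓ (K ⊓ L)ᗮ ≤ Kᗮ) {a b : V} (ha : a ∈ K) (hb : b ∈ L) (hab : a + b ∈ (K ⊓ L)ᗮ) :
    ‖a + b‖ ^ 2 ≤ ‖a‖ ^ 2 + ‖b‖ ^ 2 := by
  set p := (K ⊓ L).starProjection b
  have hp : p ∈ K ⊓ L := starProjection_apply_mem _ _
  have hbp : b - p ∈ (K ⊓ L)ᗮ := sub_starProjection_mem_orthogonal b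
  have hapK : a + p ∈ K := K.add_mem ha hp.1
  have hap : a + p ∈ (K ⊓ L)ᗮ := by
    rw [show a + p = (a + b) - (b - p) by abel]
    exact sub_mem hab hbp
  have horth : inner ℝ (a + p) (b - p) = 0 := hKL ⟨L.sub_mem hb hp.2, hbp⟩ _ hapK
  have h₁ := norm_add_sq_eq_norm_sq_add_norm_sq_real horth
  have h₂ := norm_add_sq_eq_norm_sq_add_norm_sq_real (hbp p hp)
  have h₃ := norm_sub_sq_eq_norm_sq_add_norm_sq_real ((real_inner_comm _ _).trans (hap p hp))
  rw [add_add_sub_cancel] at h₁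
  rw [add_sub_cancel] at h₂
  rw [add_sub_cancel_right] at h₃
  nlinarith [sq_nonneg ‖p‖]

lemma norm_sq_eq_add_norm_sub_starProjection_sq (C : Submodule ℝ V) [C.HasOrthogonalProjection]
    (x : V) : ‖x‖ ^ 2 = ‖C.starProjection x‖ ^ 2 + ‖x - C.starProjection x‖ ^ 2 := by
  have h := norm_add_sq_eq_norm_sq_add_norm_sq_real
    (sub_starProjection_mem_orthogonal (K := C) x _ (starProjection_apply_mem C x))
  rw [add_sub_cancel] at h
  simpa only [sq] using h

lemma norm_add_sq_add_norm_sub_sq (a b : V) :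
    ‖a + b‖ ^ 2 + ‖a - b‖ ^ 2 = 2 * ‖a‖ ^ 2 + 2 * ‖b‖ ^ 2 := by
  linarith [parallelogram_law_with_norm ℝ a b]

/-- The configuration of fixed subspaces of three consecutive root subgroups of an `A₂`-grading
(with `C` belonging to the middle root, which is the sum of the outer two). -/
structure IsHeisenbergTriple (A C B : Submodule ℝ V) [C.HasOrthogonalProjection] : Prop where
  left_invariant : ∀ a ∈ A, C.starProjection a ∈ A
  right_invariant : ∀ b ∈ B, C.starProjection b ∈ B
  orthogonal : C ⊓ B ⊓ ((A ⊓ C) ⊓ (C ⊓ B))ᗮ ≤ (A ⊓ C)ᗮ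
  inf_le : A ⊓ B ≤ C

lemma IsHeisenbergTriple.norm_add_sq_add_le {A C B : Submodule ℝ V} [C.HasOrthogonalProjection]
    [((A ⊓ C) ⊓ (C ⊓ B)).HasOrthogonalProjection] (h : IsHeisenbergTriple A C B)
    {b' b a a' : V} (hb' : b' ∈ C ⊓ B) (hb : b ∈ B) (ha : a ∈ A) (ha' : a' ∈ A ⊓ C)
    (hs : b' + b + a + a' ∈ ((A ⊓ C) ⊓ (C ⊓ B))ᗮ) :
    ‖b' + b + a + a'‖ ^ 2 + (‖b' - C.starProjection b‖ ^ 2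
      + ‖(b - C.starProjection b) - (a - C.starProjection a)‖ ^ 2)
      ≤ 2 * (‖b'‖ ^ 2 + ‖b‖ ^ 2 + ‖a‖ ^ 2 + ‖a'‖ ^ 2) := by
  set s := b' + b + a + a' with hs_def
  have hPs : C.starProjection s = (a' + C.starProjection a) + (b' + C.starProjection b) := by
    simp only [s, map_add, starProjection_eq_self_iff.2 hb'.1, starProjection_eq_self_iff.2 ha'.2]
    abel
  have hPs_orth : C.starProjection s ∈ ((A ⊓ C) ⊓ (C ⊓ B))ᗮ := by
    have hQs : s - C.starProjection s ∈ ((A ⊓ C) ⊓ (C ⊓ B))ᗮ :=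
      orthogonal_le (inf_le_left.trans inf_le_right) (sub_starProjection_mem_orthogonal s)
    simpa using sub_mem hs hQs
  have hQs : s - C.starProjection s
      = (b - C.starProjection b) + (a - C.starProjection a) := by rw [hPs, hs_def]; abel
  have hP : ‖C.starProjection s‖ ^ 2
      ≤ ‖a' + C.starProjection a‖ ^ 2 + ‖b' + C.starProjection b‖ ^ 2 := by
    rw [hPs] at hPs_orth ⊢
    exact norm_add_sq_le_of_orthogonal_inf h.orthogonal
      (add_mem ha' ⟨h.left_invariant a ha, starProjection_apply_mem _ _⟩)
      (add_mem hb' ⟨starProjection_apply_mem _ _, h.right_invariant b hb⟩) hPs_orth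
  have hQ := norm_add_sq_add_norm_sub_sq (b - C.starProjection b) (a - C.starProjection a)
  rw [← hQs] at hQ
  have hsq := norm_sq_eq_add_norm_sub_starProjection_sq C
  linarith [norm_add_sq_add_norm_sub_sq a' (C.starProjection a), hsq s, hsq a, hsq b,
    norm_add_sq_add_norm_sub_sq b' (C.starProjection b), sq_nonneg ‖a' - C.starProjection a‖]

lemma IsHeisenbergTriple.norm_add_sq_le {A C B : Submodule ℝ V} [C.HasOrthogonalProjection]
    [((A ⊓ C) ⊓ (C ⊓ B)).HasOrthogonalProjection] (h : IsHeisenbergTriple A C B)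
    {b' b a a' : V} (hb' : b' ∈ C ⊓ B) (hb : b ∈ B) (ha : a ∈ A) (ha' : a' ∈ A ⊓ C)
    (hs : b' + b + a + a' ∈ ((A ⊓ C) ⊓ (C ⊓ B))ᗮ) :
    ‖b' + b + a + a'‖ ^ 2 ≤ 2 * (‖b'‖ ^ 2 + ‖b‖ ^ 2 + ‖a‖ ^ 2 + ‖a'‖ ^ 2) :=
  le_of_add_le_of_nonneg_left (h.norm_add_sq_add_le hb' hb ha ha' hs) (by positivity)

lemma IsHeisenbergTriple.eq_of_norm_add_sq_eq {A C B : Submodule ℝ V} [C.HasOrthogonalProjection]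
    [((A ⊓ C) ⊓ (C ⊓ B)).HasOrthogonalProjection] (h : IsHeisenbergTriple A C B)
    {b' b a a' : V} (hb' : b' ∈ C ⊓ B) (hb : b ∈ B) (ha : a ∈ A) (ha' : a' ∈ A ⊓ C)
    (hs : b' + b + a + a' ∈ ((A ⊓ C) ⊓ (C ⊓ B))ᗮ)
    (heq : ‖b' + b + a + a'‖ ^ 2 = 2 * (‖b'‖ ^ 2 + ‖b‖ ^ 2 + ‖a‖ ^ 2 + ‖a'‖ ^ 2)) : b' = b := by
  have hle := h.norm_add_sq_add_le hb' hb ha ha' hs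
  have hb'_eq : b' - C.starProjection b = 0 :=
    norm_eq_zero.1 (pow_eq_zero_iff two_ne_zero |>.1 (le_antisymm (by nlinarith) (by positivity)))
  have hQ : (b - C.starProjection b) - (a - C.starProjection a) = 0 :=
    norm_eq_zero.1 (pow_eq_zero_iff two_ne_zero |>.1 (le_antisymm (by nlinarith) (by positivity)))
  have hQb : b - C.starProjection b ∈ C := by
    refine h.inf_le ⟨?_, B.sub_mem hb (h.right_invariant b hb)⟩
    rw [sub_eq_zero.1 hQ]
    exact A.sub_mem ha (h.left_invariant a ha)
  have hbC : b ∈ C := by simpa using add_mem hQb (starProjection_apply_mem C b)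
  rw [sub_eq_zero.1 hb'_eq, starProjection_eq_self_iff.2 hbC]

end InnerProduct

section Hexagon

/-- The Laplacian of the graph on `ZMod 6` joining `v` to `w` whenever `w ≠ v, v + 3`: the roots
of `A₂`, numbered cyclically, with non-opposite roots adjacent. -/
def rootLaplacian {V : Type*} [AddCommGroup V] (z : ZMod 6 → V) (v : ZMod 6) : V :=
  (z v - z (v + 1)) + (z v - z (v + 2)) + (z v - z (v + 4)) + (z v - z (v + 5))

variable {V : Type*} [NormedAddCommGroup V] [InnerProductSpace ℝ V]

lemma sum_univ_zmod_six {M : Type*} [AddCommMonoid M] (g : ZMod 6 → M) :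
    ∑ v, g v = g 0 + g 1 + g 2 + g 3 + g 4 + g 5 :=
  Fin.sum_univ_six g

lemma sum_norm_rootLaplacian_sq (z : ZMod 6 → V) :
    ∑ v, ‖rootLaplacian z v‖ ^ 2
      = ∑ v, 2 * (‖z v - z (v + 1)‖ ^ 2 + ‖z v - z (v + 2)‖ ^ 2 + ‖z v - z (v + 4)‖ ^ 2
        + ‖z v - z (v + 5)‖ ^ 2)
      + 3 * ∑ v, ‖z v + z (v + 3) - (1 / 3 : ℝ) • ∑ w, z w‖ ^ 2 := by
  have hadd : (1 + 1 : ZMod 6) = 2 ∧ (2 + 1 : ZMod 6) = 3 ∧ (3 + 1 : ZMod 6) = 4 ∧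
      (4 + 1 : ZMod 6) = 5 ∧ (5 + 1 : ZMod 6) = 0 ∧ (1 + 2 : ZMod 6) = 3 ∧ (2 + 2 : ZMod 6) = 4 ∧
      (3 + 2 : ZMod 6) = 5 ∧ (4 + 2 : ZMod 6) = 0 ∧ (5 + 2 : ZMod 6) = 1 ∧ (1 + 4 : ZMod 6) = 5 ∧
      (2 + 4 : ZMod 6) = 0 ∧ (3 + 4 : ZMod 6) = 1 ∧ (4 + 4 : ZMod 6) = 2 ∧ (5 + 4 : ZMod 6) = 3 ∧
      (1 + 5 : ZMod 6) = 0 ∧ (2 + 5 : ZMod 6) = 1 ∧ (3 + 5 : ZMod 6) = 2 ∧ (4 + 5 : ZMod 6) = 3 ∧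
      (5 + 5 : ZMod 6) = 4 ∧ (1 + 3 : ZMod 6) = 4 ∧ (2 + 3 : ZMod 6) = 5 ∧ (3 + 3 : ZMod 6) = 0 ∧
      (4 + 3 : ZMod 6) = 1 ∧ (5 + 3 : ZMod 6) = 2 := by decide
  simp only [sum_univ_zmod_six, rootLaplacian, zero_add, hadd]
  simp only [← real_inner_self_eq_norm_sq, inner_add_left, inner_add_right, inner_sub_left,
    inner_sub_right, inner_smul_left, inner_smul_right, map_div₀, map_one, map_ofNat]
  simp only [real_inner_comm (z 0), real_inner_comm (z 1) (z 2), real_inner_comm (z 1) (z 3),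
    real_inner_comm (z 1) (z 4), real_inner_comm (z 1) (z 5), real_inner_comm (z 2) (z 3),
    real_inner_comm (z 2) (z 4), real_inner_comm (z 2) (z 5), real_inner_comm (z 3) (z 4),
    real_inner_comm (z 3) (z 5), real_inner_comm (z 4) (z 5)]
  ring

lemma exists_mem_forall_inner_map_sub_eq_zero {E F : Type*} [AddCommGroup E] [Module ℝ E]
    [NormedAddCommGroup F] [InnerProductSpace ℝ F] (D : E →ₗ[ℝ] F) (S : Submodule ℝ E)
    [(S.map D).HasOrthogonalProjection] (z : E) :
    ∃ y ∈ S, ∀ x ∈ S, inner ℝ (D (z - y)) (D x) = 0 := by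
  obtain ⟨y, hy, hyD⟩ := (S.map D).starProjection_apply_mem (D z)
  refine ⟨y, hy, fun x hx ↦ ?_⟩
  rw [map_sub, hyD]
  exact Submodule.starProjection_inner_eq_zero _ _ (Submodule.mem_map_of_mem hx)

/-- The differences of `z` along the edges of the graph underlying `rootLaplacian`. -/
def rootGradient : (ZMod 6 → V) →ₗ[ℝ] PiLp 2 (fun _ : ZMod 6 × Bool ↦ V) where
  toFun z := WithLp.toLp 2 fun p ↦ z p.1 - z (p.1 + if p.2 then 1 else 2)
  map_add' x y := by ext p; simp [add_sub_add_comm]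
  map_smul' c x := by ext p; simp [smul_sub]

lemma inner_rootGradient_single (z : ZMod 6 → V) (v : ZMod 6) (x : V) :
    inner ℝ (rootGradient z) (rootGradient (Pi.single v x)) = inner ℝ (rootLaplacian z v) x := by
  have hshift (g : ZMod 6 → V) (c : ZMod 6) :
      ∑ w, inner ℝ (g w) ((Pi.single v x : ZMod 6 → V) (w + c)) = inner ℝ (g (v - c)) x := by
    rw [← Equiv.sum_comp (Equiv.subRight c), Finset.sum_eq_single v]
    · simp
    · intro w _ hw
      simp [hw]
    · simp
  have hfour : v + 4 = v - 2 := by rw [sub_eq_add_neg]; rfl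
  have hfive : v + 5 = v - 1 := by rw [sub_eq_add_neg]; rfl
  have h₀ (g : ZMod 6 → V) := hshift g 0
  simp only [add_zero, sub_zero] at h₀
  rw [PiLp.inner_apply, Fintype.sum_prod_type]
  simp only [rootGradient, LinearMap.coe_mk, AddHom.coe_mk, Fintype.sum_bool, if_true,
    Bool.false_eq_true, if_false, inner_sub_right, Finset.sum_add_distrib, Finset.sum_sub_distrib,
    h₀ (fun w ↦ z w - z (w + 1)), h₀ (fun w ↦ z w - z (w + 2)),
    hshift (fun w ↦ z w - z (w + 1)), hshift (fun w ↦ z w - z (w + 2)), sub_add_cancel]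
  simp only [rootLaplacian, hfour, hfive, inner_add_left, inner_sub_left]
  ring

lemma exists_rootLaplacian_sub_mem_orthogonal [FiniteDimensional ℝ V]
    (U : ZMod 6 → Submodule ℝ V) (z : ZMod 6 → V) :
    ∃ y : ZMod 6 → V, (∀ v, y v ∈ U v) ∧ ∀ v, rootLaplacian (z - y) v ∈ (U v)ᗮ := by
  obtain ⟨y, hy, horth⟩ :=
    exists_mem_forall_inner_map_sub_eq_zero rootGradient (Submodule.pi Set.univ U) z
  refine ⟨y, fun v ↦ hy v trivial, fun v x hx ↦ ?_⟩
  rw [real_inner_comm, ← inner_rootGradient_single]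
  refine horth _ fun w _ ↦ ?_
  obtain rfl | hw := eq_or_ne w v
  · simpa using hx
  · simp [hw]

lemma eq_of_rootLaplacian_mem_orthogonal [FiniteDimensional ℝ V]
    {W : ZMod 6 → Submodule ℝ V} (hW : ∀ v, IsHeisenbergTriple (W v) (W (v + 1)) (W (v + 2)))
    {z : ZMod 6 → V} (hz₁ : ∀ v, z v - z (v + 1) ∈ W (v + 1) ⊓ W (v + 2))
    (hz₂ : ∀ v, z v - z (v + 2) ∈ W (v + 2))
    (horth : ∀ v, rootLaplacian z v ∈ ((W v ⊓ W (v + 1)) ⊓ (W (v + 1) ⊓ W (v + 2)))ᗮ)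
    (v w : ZMod 6) : z v = z w := by
  have hmod : ∀ v : ZMod 6, v + 4 + 2 = v ∧ v + 5 + 1 = v ∧ v + 5 + 2 = v + 1 := by decide
  have hz₄ (v) : z v - z (v + 4) ∈ W v := by
    have h := neg_mem (hz₂ (v + 4))
    rwa [neg_sub, (hmod v).1] at h
  have hz₅ (v) : z v - z (v + 5) ∈ W v ⊓ W (v + 1) := by
    have h := neg_mem (hz₁ (v + 5))
    rwa [neg_sub, (hmod v).2.1, (hmod v).2.2] at h
  have hle (v) := (hW v).norm_add_sq_le (hz₁ v) (hz₂ v) (hz₄ v) (hz₅ v) (horth v)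
  have hsum := sum_norm_rootLaplacian_sq z
  have heq := (Finset.sum_eq_sum_iff_of_le fun v _ ↦ hle v).1 <|
    (Finset.sum_le_sum fun v _ ↦ hle v).antisymm (hsum ▸ le_add_of_nonneg_right (by positivity))
  have hstep (v) : z (v + 1) = z (v + 2) := sub_right_inj.1 <|
    (hW v).eq_of_norm_add_sq_eq (hz₁ v) (hz₂ v) (hz₄ v) (hz₅ v) (horth v)
      (heq v (Finset.mem_univ v))
  have hzero (k : ℕ) : z k = z 0 := by
    induction k with
    | zero => simp
    | succ k ih =>
      rw [← ih, Nat.cast_succ]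
      simpa [add_assoc, show (-1 + 2 : ZMod 6) = 1 from rfl] using (hstep (k + -1)).symm
  rw [← ZMod.natCast_zmod_val v, ← ZMod.natCast_zmod_val w, hzero, hzero]

/-- Minimise the energy `∑ ‖z v - z w‖²` over the edges of the root graph: at a minimiser each
vertex inequality must be an equality, by `sum_norm_rootLaplacian_sq`. -/
theorem exists_forall_sub_eq_sub_of_isHeisenbergTriple [FiniteDimensional ℝ V]
    {W : ZMod 6 → Submodule ℝ V} (hW : ∀ v, IsHeisenbergTriple (W v) (W (v + 1)) (W (v + 2)))
    {p : ZMod 6 → V} (hp₁ : ∀ v, p v - p (v + 1) ∈ W (v + 1) ⊓ W (v + 2))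
    (hp₂ : ∀ v, p v - p (v + 2) ∈ W (v + 2)) :
    ∃ y : ZMod 6 → V, (∀ v, y v ∈ W v ⊓ W (v + 1) ⊓ W (v + 2)) ∧
      ∀ v w, p v - y v = p w - y w := by
  obtain ⟨y, hy, horth⟩ := exists_rootLaplacian_sub_mem_orthogonal
    (fun v ↦ (W v ⊓ W (v + 1)) ⊓ (W (v + 1) ⊓ W (v + 2))) p
  refine ⟨y, fun v ↦ ⟨(hy v).1, (hy v).2.2⟩, eq_of_rootLaplacian_mem_orthogonal (z := p - y) hW
    (fun v ↦ ?_) (fun v ↦ ?_) horth⟩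
  · have hy' := (hy (v + 1)).1
    rw [add_assoc, show (1 + 1 : ZMod 6) = 2 from rfl] at hy'
    simpa only [Pi.sub_apply, sub_sub_sub_comm] using sub_mem (hp₁ v) (sub_mem (hy v).2 hy')
  · simpa only [Pi.sub_apply, sub_sub_sub_comm] using
      sub_mem (hp₂ v) (sub_mem (hy v).2.2 (hy (v + 2)).1.1)

end Hexagon

section A2Grading

variable {G : Type*} [Group G]

/-- A family of subgroups indexed cyclically by the six roots of `A₂`, in which roots at angle
`π / 3` commute and roots at angle `2π / 3` have the subgroup of the root between them as their
commutator. -/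
structure IsA2Grading (X : ZMod 6 → Subgroup G) : Prop where
  commutator_add_one : ∀ v, ⁅X v, X (v + 1)⁆ = ⊥
  commutator_add_two : ∀ v, ⁅X v, X (v + 2)⁆ = X (v + 1)

lemma le_normalizer_sup {A B C : Subgroup G} (hAC : ⁅A, C⁆ ≤ C) (hAB : ⁅A, B⁆ ≤ C) :
    A ≤ Subgroup.normalizer ↑(C ⊔ B) := by
  rw [← Subgroup.closure_eq C, ← Subgroup.closure_eq B, ← Subgroup.closure_union,
    Subgroup.le_normalizer_closure_iff]
  intro a ha x hx
  rw [← MulAut.conj_apply, conj_eq_commutatorElement_mul]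
  refine mul_mem ?_ (Subgroup.subset_closure hx)
  refine Subgroup.subset_closure (Or.inl ?_)
  exact hx.elim (fun hxC ↦ hAC (Subgroup.commutator_mem_commutator ha hxC))
    (fun hxB ↦ hAB (Subgroup.commutator_mem_commutator ha hxB))

namespace IsA2Grading

variable {X : ZMod 6 → Subgroup G} (hX : IsA2Grading X)
include hX

lemma commutator_add_one_add_two (v : ZMod 6) : ⁅X (v + 1), X (v + 2)⁆ = ⊥ := by
  rw [← hX.commutator_add_one (v + 1), add_assoc, one_add_one_eq_two]

lemma le_normalizer_add_one (v : ZMod 6) :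
    X v ≤ Subgroup.normalizer ↑(X (v + 1)) :=
  Subgroup.le_normalizer_iff_commutator_le_right.2 (hX.commutator_add_one v ▸ bot_le)

lemma add_two_le_normalizer_add_one (v : ZMod 6) :
    X (v + 2) ≤ Subgroup.normalizer ↑(X (v + 1)) :=
  Subgroup.le_normalizer_iff_commutator_le_left.2 (hX.commutator_add_one_add_two v ▸ bot_le)

lemma le_normalizer_sup (v : ZMod 6) :
    X v ≤ Subgroup.normalizer ↑(X (v + 1) ⊔ X (v + 2)) :=
  ErshovHe.le_normalizer_sup (hX.commutator_add_one v ▸ bot_le) (hX.commutator_add_two v).le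

end IsA2Grading

end A2Grading

section FixedVectors

open Submodule

variable {V : Type*} [NormedAddCommGroup V] [InnerProductSpace ℝ V]
  {G : Type*} [Group G] (ρ : G →* (V ≃ₗᵢ[ℝ] V))

/-- The subspace of vectors fixed by the subgroup `X` in the representation `ρ`. -/
def fixedVectors (X : Subgroup G) : Submodule ℝ V where
  carrier := {v | ∀ g ∈ X, ρ g v = v}
  zero_mem' := fun g _ ↦ map_zero (ρ g)
  add_mem' := fun hv hw g hg ↦ by rw [map_add, hv g hg, hw g hg]
  smul_mem' := fun c v hv g hg ↦ by rw [map_smul, hv g hg]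

variable {ρ}

lemma fixedVectors_anti {X Y : Subgroup G} (h : X ≤ Y) :
    fixedVectors ρ Y ≤ fixedVectors ρ X := fun _ hv g hg ↦ hv g (h hg)

lemma map_mul_apply (g h : G) (v : V) : ρ (g * h) v = ρ g (ρ h v) := by
  rw [map_mul, LinearIsometryEquiv.coe_mul, Function.comp_apply]

lemma fixedVectors_sup (X Y : Subgroup G) :
    fixedVectors ρ (X ⊔ Y) = fixedVectors ρ X ⊓ fixedVectors ρ Y := by
  refine le_antisymm (le_inf (fixedVectors_anti le_sup_left) (fixedVectors_anti le_sup_right)) ?_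
  rintro v ⟨hX, hY⟩ g hg
  rw [Subgroup.sup_eq_closure] at hg
  induction hg using Subgroup.closure_induction with
  | mem g hg => exact hg.elim (hX g) (hY g)
  | one => rw [map_one, LinearIsometryEquiv.coe_one, id]
  | mul g h _ _ hg hh => rw [map_mul_apply, hh, hg]
  | inv g _ hg => rw [map_inv, LinearIsometryEquiv.inv_def, LinearIsometryEquiv.symm_apply_eq, hg]

lemma apply_mem_fixedVectors {X : Subgroup G} {g : G} (hg : g ∈ Subgroup.normalizer (X : Set G))
    {v : V} (hv : v ∈ fixedVectors ρ X) : ρ g v ∈ fixedVectors ρ X := by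
  intro x hx
  have hconj : g⁻¹ * x * g ∈ X := (Subgroup.mem_normalizer_iff''.1 hg x).1 hx
  rw [← map_mul_apply, ← mul_inv_cancel_left g (x * g), map_mul_apply, ← mul_assoc, hv _ hconj]

lemma map_fixedVectors {X : Subgroup G} {g : G} (hg : g ∈ Subgroup.normalizer (X : Set G)) :
    (fixedVectors ρ X).map ((ρ g).toLinearEquiv : V →ₗ[ℝ] V) = fixedVectors ρ X := by
  refine le_antisymm (map_le_iff_le_comap.2 fun v hv ↦ apply_mem_fixedVectors hg hv) fun v hv ↦ ?_
  refine ⟨ρ g⁻¹ v, apply_mem_fixedVectors (inv_mem hg) hv, ?_⟩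
  change ρ g (ρ g⁻¹ v) = v
  rw [← map_mul_apply, mul_inv_cancel, map_one, LinearIsometryEquiv.coe_one, id]

variable [FiniteDimensional ℝ V]

lemma starProjection_mem_fixedVectors {X K : Subgroup G} (hX : X ≤ Subgroup.normalizer (K : Set G))
    {v : V} (hv : v ∈ fixedVectors ρ X) :
    (fixedVectors ρ K).starProjection v ∈ fixedVectors ρ X := by
  intro g hg
  have h := starProjection_map_apply (ρ g) (fixedVectors ρ K) v
  simp only [map_fixedVectors (hX hg), (ρ g).symm_apply_eq.2 (hv g hg).symm] at h
  exact h.symm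

lemma IsA2Grading.isHeisenbergTriple {X : ZMod 6 → Subgroup G} (hX : IsA2Grading X) (v : ZMod 6) :
    IsHeisenbergTriple (fixedVectors ρ (X v)) (fixedVectors ρ (X (v + 1)))
      (fixedVectors ρ (X (v + 2))) where
  left_invariant _ := starProjection_mem_fixedVectors (hX.le_normalizer_add_one v)
  right_invariant _ := starProjection_mem_fixedVectors (hX.add_two_le_normalizer_add_one v)
  orthogonal := by
    rintro x ⟨hx, hx_orth⟩ a ⟨haA, _⟩
    have hP := starProjection_mem_fixedVectors (hX.le_normalizer_sup v) haA
    have hP' := starProjection_apply_mem (fixedVectors ρ (X (v + 1) ⊔ X (v + 2))) a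
    simp only [fixedVectors_sup] at hP hP'
    have h := hx_orth _ ⟨⟨hP, hP'.1⟩, hP'⟩
    rwa [inner_starProjection_left_eq_right, starProjection_eq_self_iff.2 (by simpa using hx)] at h
  inf_le := by
    rw [← fixedVectors_sup, ← hX.commutator_add_two v]
    exact fixedVectors_anti (Subgroup.commutator_le_sup _ _)

end FixedVectors

section AffineAction

open Submodule

variable {V : Type*} [NormedAddCommGroup V] [InnerProductSpace ℝ V]

/-- The homomorphism sending an affine isometry of `V` to its linear part. -/
def linearPart : (V ≃ᵃⁱ[ℝ] V) →* (V ≃ₗᵢ[ℝ] V) where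
  toFun g := g.linearIsometryEquiv
  map_one' := rfl
  map_mul' _ _ := rfl

/-- The group of affine isometries of `V` that fix the point `p`. -/
def pointStabilizer (p : V) : Subgroup (V ≃ᵃⁱ[ℝ] V) where
  carrier := {g | g p = p}
  one_mem' := rfl
  mul_mem' := fun {g h} hg hh ↦ show g (h p) = p by rw [hh, hg]
  inv_mem' := fun {g} hg ↦ g.symm_apply_eq.2 hg.symm

lemma mem_pointStabilizer {p : V} {g : V ≃ᵃⁱ[ℝ] V} : g ∈ pointStabilizer p ↔ g p = p := Iff.rfl

lemma sub_mem_fixedVectors_linearPart {X : Subgroup (V ≃ᵃⁱ[ℝ] V)} {p q : V}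
    (hp : X ≤ pointStabilizer p) (hq : X ≤ pointStabilizer q) :
    p - q ∈ fixedVectors linearPart X := fun g hg ↦
  (g.map_vsub p q).trans (congrArg₂ (· - ·) (hp hg) (hq hg))

lemma le_pointStabilizer_sub {X : Subgroup (V ≃ᵃⁱ[ℝ] V)} {p w : V}
    (hp : X ≤ pointStabilizer p) (hw : w ∈ fixedVectors linearPart X) :
    X ≤ pointStabilizer (p - w) := fun g hg ↦ by
  have hgw : g.linearIsometryEquiv w = w := hw g hg
  rw [mem_pointStabilizer, sub_eq_neg_add, ← vadd_eq_add, g.map_vadd, map_neg, hgw, hp hg]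

lemma IsA2Grading.exists_forall_le_pointStabilizer [FiniteDimensional ℝ V]
    {X : ZMod 6 → Subgroup (V ≃ᵃⁱ[ℝ] V)} (hX : IsA2Grading X)
    (hfix : ∀ v, ∃ p : V, X v ⊔ (X (v + 1) ⊔ X (v + 2)) ≤ pointStabilizer p) :
    ∃ p : V, ∀ v, X v ≤ pointStabilizer p := by
  choose p hp using hfix
  simp only [sup_le_iff] at hp
  have hp₁ (v) : X (v + 2) ≤ pointStabilizer (p (v + 1)) := by
    simpa only [add_assoc, one_add_one_eq_two] using (hp (v + 1)).2.1
  obtain ⟨y, hy, hpy⟩ := exists_forall_sub_eq_sub_of_isHeisenbergTriple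
    (fun v ↦ hX.isHeisenbergTriple (ρ := linearPart) v) (p := p)
    (fun v ↦ ⟨sub_mem_fixedVectors_linearPart (hp v).2.1 (hp (v + 1)).1,
      sub_mem_fixedVectors_linearPart (hp v).2.2 (hp₁ v)⟩)
    (fun v ↦ sub_mem_fixedVectors_linearPart (hp v).2.2 (hp (v + 2)).1)
  exact ⟨p 0 - y 0, fun v ↦ hpy 0 v ▸ le_pointStabilizer_sub (hp v).1 (hy v).1.1⟩

lemma exists_le_pointStabilizer_of_finite (X : Subgroup (V ≃ᵃⁱ[ℝ] V)) [Finite X] :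
    ∃ p : V, X ≤ pointStabilizer p := by
  have := Fintype.ofFinite X
  let orbit : X → V := fun g ↦ (g : V ≃ᵃⁱ[ℝ] V) 0
  refine ⟨Finset.univ.centroid ℝ orbit, fun g hg ↦ ?_⟩
  have hmap := Finset.univ.map_affineCombination orbit (Finset.univ.centroidWeights ℝ)
    (Finset.univ.sum_centroidWeights_eq_one_of_nonempty ℝ Finset.univ_nonempty)
    g.toAffineEquiv.toAffineMap
  have hperm := Finset.univ.centroid_map ℝ (Equiv.mulLeft (⟨g, hg⟩ : X)).toEmbedding orbit
  rw [Finset.map_univ_equiv] at hperm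
  exact hmap.trans hperm.symm

end AffineAction

section Finiteness

variable {G : Type*} [Group G]

lemma finite_sup_of_le_normalizer {H N : Subgroup G} [Finite H] [Finite N]
    (h : H ≤ Subgroup.normalizer (N : Set G)) : Finite ↥(H ⊔ N) := by
  have := (Set.toFinite (H : Set G)).mul (Set.toFinite (N : Set G))
  rwa [← Subgroup.coe_mul_of_left_le_normalizer_right _ _ h] at this

open scoped IsMulCommutative in
lemma finite_closure_of_isOfFinOrder {S : Set G} (hS : S.Finite)
    (hcomm : ∀ x ∈ S, ∀ y ∈ S, x * y = y * x) (hfin : ∀ x ∈ S, IsOfFinOrder x) :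
    Finite (Subgroup.closure S) := by
  have := Subgroup.isMulCommutative_closure hcomm
  have := hS.to_subtype
  refine CommGroup.finite_of_fg_isMulTorsion _ fun ⟨x, hx⟩ ↦ ?_
  induction hx using Subgroup.closure_induction with
  | mem x hx => exact Submonoid.isOfFinOrder_coe.1 (hfin x hx)
  | one => exact IsOfFinOrder.one
  | mul x y hx hy h1 h2 => exact (Commute.all _ _).isOfFinOrder_mul h1 h2
  | inv x hx h => exact h.inv

end Finiteness

section Steinberg

variable {ι κ G : Type*} [Group G]

open Subgroup
open scoped commutatorElement

/-- The Steinberg relations for a family `e i j` of elements of a group; those with `i = j` are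
unconstrained. -/
structure IsSteinberg (e : ι → ι → G) : Prop where
  commute : ∀ {i j k l}, i ≠ j → k ≠ l → j ≠ k → i ≠ l → Commute (e i j) (e k l)
  commutator : ∀ {i j k}, i ≠ j → j ≠ k → i ≠ k → ⁅e i j, e j k⁆ = e i k

lemma commutatorElement_mem_of_mem_closure {S : Set G} {C : Subgroup G}
    (hS : closure S ≤ centralizer C) {t : G} (h : ∀ s ∈ S, ⁅s, t⁆ ∈ C) {x : G}
    (hx : x ∈ closure S) : ⁅x, t⁆ ∈ C := by
  induction hx using closure_induction with
  | mem s hs => exact h s hs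
  | one => simp
  | mul a b ha hb iha ihb =>
    rw [commutatorElement_mul_left_eq_conj_mul, ← mem_centralizer_iff.1 (hS ha) _ ihb,
      mul_inv_cancel_right]
    exact mul_mem ihb iha
  | inv a ha iha =>
    have ihi : ⁅t, a⁆ ∈ C := commutatorElement_inv a t ▸ inv_mem iha
    rwa [commutatorElement_inv_left, mul_assoc, mem_centralizer_iff.1 (hS ha) _ ihi,
      inv_mul_cancel_left]

lemma commutator_closure_le {S T : Set G} {C : Subgroup G} (hS : closure S ≤ centralizer C)
    (hT : closure T ≤ centralizer C) (h : ∀ s ∈ S, ∀ t ∈ T, ⁅s, t⁆ ∈ C) :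
    ⁅closure S, closure T⁆ ≤ C := by
  refine commutator_le.2 fun x hx y hy ↦ ?_
  rw [← inv_mem_iff, commutatorElement_inv]
  refine commutatorElement_mem_of_mem_closure hT (fun t ht ↦ ?_) hy
  rw [← inv_mem_iff, commutatorElement_inv]
  exact commutatorElement_mem_of_mem_closure hS (fun s hs ↦ h s hs t ht) hx

/-- For a colouring `β` of the indices, the subgroup generated by the elements `e i j` with `i` of
colour `a` and `j` of colour `b`. -/
def blockSubgroup (e : ι → ι → G) (β : ι → κ) (a b : κ) : Subgroup G :=
  closure {x | ∃ i j, β i = a ∧ β j = b ∧ e i j = x}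

lemma mem_blockSubgroup (e : ι → ι → G) (β : ι → κ) (i j : ι) :
    e i j ∈ blockSubgroup e β (β i) (β j) := subset_closure ⟨i, j, rfl, rfl, rfl⟩

namespace IsSteinberg

variable {e : ι → ι → G} (he : IsSteinberg e) {β : ι → κ}
include he

lemma map {H : Type*} [Group H] (f : G →* H) : IsSteinberg fun i j ↦ f (e i j) where
  commute hij hkl hjk hil := (he.commute hij hkl hjk hil).map f
  commutator hij hjk hik := by rw [← map_commutatorElement, he.commutator hij hjk hik]

lemma commutator_blockSubgroup_eq_bot {a b c d : κ} (hab : a ≠ b) (hcd : c ≠ d) (hbc : b ≠ c)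
    (had : a ≠ d) : ⁅blockSubgroup e β a b, blockSubgroup e β c d⁆ = ⊥ := by
  refine le_bot_iff.1 (commutator_closure_le ?_ ?_ ?_)
  · exact commutator_eq_bot_iff_le_centralizer.1 (commutator_bot_right _)
  · exact commutator_eq_bot_iff_le_centralizer.1 (commutator_bot_right _)
  rintro _ ⟨i, j, rfl, rfl, rfl⟩ _ ⟨k, l, rfl, rfl, rfl⟩
  exact commutatorElement_eq_one_iff_commute.2 (he.commute (ne_of_apply_ne β hab)
    (ne_of_apply_ne β hcd) (ne_of_apply_ne β hbc) (ne_of_apply_ne β had))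

lemma commutator_blockSubgroup (hβ : Function.Surjective β) {a b c : κ} (hab : a ≠ b) (hbc : b ≠ c)
    (hac : a ≠ c) :
    ⁅blockSubgroup e β a b, blockSubgroup e β b c⁆ = blockSubgroup e β a c := by
  refine le_antisymm (commutator_closure_le ?_ ?_ ?_) ((closure_le _).2 ?_)
  · exact commutator_eq_bot_iff_le_centralizer.1
      (he.commutator_blockSubgroup_eq_bot hab hac hab.symm hac)
  · exact commutator_eq_bot_iff_le_centralizer.1
      (he.commutator_blockSubgroup_eq_bot hbc hac hac.symm hbc)
  · rintro _ ⟨i, j, rfl, rfl, rfl⟩ _ ⟨k, l, hk, rfl, rfl⟩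
    have hij := ne_of_apply_ne β hab
    have hil := ne_of_apply_ne β hac
    have hkl := ne_of_apply_ne β (hk ▸ hbc)
    obtain rfl | hjk := eq_or_ne j k
    · exact he.commutator hij hkl hil ▸ mem_blockSubgroup e β i l
    · exact commutatorElement_eq_one_iff_commute.2 (he.commute hij hkl hjk hil) ▸ one_mem _
  · rintro _ ⟨i, k, rfl, rfl, rfl⟩
    obtain ⟨j, rfl⟩ := hβ b
    rw [SetLike.mem_coe, ← he.commutator (ne_of_apply_ne β hab) (ne_of_apply_ne β hbc)
      (ne_of_apply_ne β hac)]
    exact commutator_mem_commutator (mem_blockSubgroup e β i j) (mem_blockSubgroup e β j k)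

end IsSteinberg

/-- The first coordinate of the roots `(a, b)` of `A₂`, listed in cyclic order. -/
def rootSource : ZMod 6 → Fin 3 := ![0, 0, 1, 1, 2, 2]

/-- The second coordinate of the roots `(a, b)` of `A₂`, listed in cyclic order. -/
def rootTarget : ZMod 6 → Fin 3 := ![1, 2, 2, 0, 0, 1]

lemma rootSource_ne_rootTarget : ∀ v, rootSource v ≠ rootTarget v := by decide

lemma exists_rootSource_eq_rootTarget_eq :
    ∀ a b, a ≠ b → ∃ v, rootSource v = a ∧ rootTarget v = b := by decide

lemma rootTarget_ne_rootSource_add_one :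
    ∀ v, rootTarget v ≠ rootSource (v + 1) ∧ rootSource v ≠ rootTarget (v + 1) := by decide

lemma composable_add_two : ∀ v,
    (rootTarget v = rootSource (v + 2) ∧ rootSource (v + 1) = rootSource v ∧
      rootTarget (v + 1) = rootTarget (v + 2)) ∨
    (rootTarget (v + 2) = rootSource v ∧ rootSource (v + 1) = rootSource (v + 2) ∧
      rootTarget (v + 1) = rootTarget v) := by decide

lemma IsSteinberg.isA2Grading {e : ι → ι → G} (he : IsSteinberg e) {β : ι → Fin 3}
    (hβ : Function.Surjective β) :
    IsA2Grading fun v ↦ blockSubgroup e β (rootSource v) (rootTarget v) where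
  commutator_add_one v := he.commutator_blockSubgroup_eq_bot (rootSource_ne_rootTarget v)
    (rootSource_ne_rootTarget (v + 1)) (rootTarget_ne_rootSource_add_one v).1
    (rootTarget_ne_rootSource_add_one v).2
  commutator_add_two v := by
    have h₀ := rootSource_ne_rootTarget v
    have h₁ := rootSource_ne_rootTarget (v + 1)
    have h₂ := rootSource_ne_rootTarget (v + 2)
    obtain ⟨h, hs, ht⟩ | ⟨h, hs, ht⟩ := composable_add_two v
    · rw [hs, ht] at h₁ ⊢
      exact h ▸ he.commutator_blockSubgroup hβ h₀ (h ▸ h₂) h₁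
    · rw [hs, ht] at h₁ ⊢
      rw [commutator_comm]
      exact h ▸ he.commutator_blockSubgroup hβ h₂ (h ▸ h₀) h₁

end Steinberg

section SteinbergFixedPoint

variable {ι : Type*}

open scoped commutatorElement

lemma commutatorElement_pow_right {G : Type*} [Group G] {x y : G} (hy : Commute ⁅x, y⁆ y) (b : ℕ) :
    ⁅x, y ^ b⁆ = ⁅x, y⁆ ^ b := by
  rw [commutatorElement_def, mul_inv_eq_iff_eq_mul, ← conj_pow, ← hy.mul_pow, commutatorElement_def,
    inv_mul_cancel_right]

lemma commutatorElement_pow_left {G : Type*} [Group G] {x y : G} (hx : Commute ⁅x, y⁆ x) (a : ℕ) :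
    ⁅x ^ a, y⁆ = ⁅x, y⁆ ^ a := by
  rw [← commutatorElement_inv, ← commutatorElement_inv y x, inv_pow, inv_inj]
  refine commutatorElement_pow_right ?_ a
  rw [← commutatorElement_inv]
  exact hx.inv_left

lemma IsSteinberg.commutator_pow {G : Type*} [Group G] {e : ι → ι → G} (he : IsSteinberg e)
    {i j k : ι} (hij : i ≠ j) (hjk : j ≠ k) (hik : i ≠ k) (a b : ℕ) :
    ⁅e i j ^ a, e j k ^ b⁆ = e i k ^ (a * b) := by
  have hij_comm : Commute (e i k) (e i j) := he.commute hik hij hik.symm hij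
  have hjk_comm : Commute (e i k) (e j k) := he.commute hik hjk hjk.symm hik
  rw [commutatorElement_pow_right, commutatorElement_pow_left, he.commutator hij hjk hik, pow_mul]
  · rwa [he.commutator hij hjk hik]
  · rw [commutatorElement_pow_left, he.commutator hij hjk hik]
    exacts [hjk_comm.pow_left a, (he.commutator hij hjk hik).symm ▸ hij_comm]

variable {V : Type*} [NormedAddCommGroup V] [InnerProductSpace ℝ V]

lemma apply_eq_add_of_linearPart_eq_one {g : V ≃ᵃⁱ[ℝ] V} (hg : linearPart g = 1) (v : V) :
    g v = v + g 0 := by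
  have h := g.map_vadd 0 v
  rwa [vadd_eq_add, vadd_eq_add, add_zero, show g.linearIsometryEquiv = 1 from hg] at h

lemma commute_of_linearPart_eq_one {g h : V ≃ᵃⁱ[ℝ] V} (hg : linearPart g = 1)
    (hh : linearPart h = 1) : Commute g h := by
  ext v
  change g (h v) = h (g v)
  rw [apply_eq_add_of_linearPart_eq_one hg, apply_eq_add_of_linearPart_eq_one hh,
    apply_eq_add_of_linearPart_eq_one hh (g v), apply_eq_add_of_linearPart_eq_one hg v,
    add_right_comm]

lemma IsSteinberg.isOfFinOrder {e : ι → ι → V ≃ᵃⁱ[ℝ] V} (he : IsSteinberg e)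
    (hfin : ∀ i j, IsOfFinOrder (linearPart (e i j))) {i j k : ι} (hij : i ≠ j) (hjk : j ≠ k)
    (hik : i ≠ k) : IsOfFinOrder (e i k) := by
  obtain ⟨m, hm, hm_eq⟩ := isOfFinOrder_iff_pow_eq_one.1 (hfin i j)
  obtain ⟨n, hn, hn_eq⟩ := isOfFinOrder_iff_pow_eq_one.1 (hfin j k)
  refine isOfFinOrder_iff_pow_eq_one.2 ⟨m * n, Nat.mul_pos hm hn, ?_⟩
  rw [← he.commutator_pow hij hjk hik, commutatorElement_eq_one_iff_commute]
  exact commute_of_linearPart_eq_one (by rw [map_pow, hm_eq]) (by rw [map_pow, hn_eq])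

lemma IsA2Grading.finite_sup {G : Type*} [Group G] {X : ZMod 6 → Subgroup G}
    (hX : IsA2Grading X) [∀ v, Finite (X v)] (v : ZMod 6) :
    Finite ↥(X v ⊔ (X (v + 1) ⊔ X (v + 2))) := by
  have h := hX.le_normalizer_add_one (v + 1)
  rw [add_assoc, one_add_one_eq_two] at h
  have := finite_sup_of_le_normalizer h
  exact finite_sup_of_le_normalizer (hX.le_normalizer_sup v)

lemma IsSteinberg.finite_blockSubgroup {G κ : Type*} [Group G] [Finite ι] {e : ι → ι → G}
    (he : IsSteinberg e) (hfin : ∀ {i j}, i ≠ j → IsOfFinOrder (e i j)) {β : ι → κ} {a b : κ}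
    (hab : a ≠ b) : Finite (blockSubgroup e β a b) := by
  refine finite_closure_of_isOfFinOrder ?_ ?_ ?_
  · exact (Set.finite_range fun q : ι × ι ↦ e q.1 q.2).subset
      fun _ ⟨i, j, _, _, h⟩ ↦ ⟨(i, j), h⟩
  · rintro _ ⟨i, j, rfl, rfl, rfl⟩ _ ⟨k, l, hk, hl, rfl⟩
    exact he.commute (ne_of_apply_ne β hab) (ne_of_apply_ne β (hk ▸ hl ▸ hab))
      (ne_of_apply_ne β (hk ▸ hab.symm)) (ne_of_apply_ne β (hl ▸ hab))
  · rintro _ ⟨i, j, rfl, rfl, rfl⟩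
    exact hfin (ne_of_apply_ne β hab)

lemma exists_ne_ne_of_three_le_card [Fintype ι] (hι : 3 ≤ Fintype.card ι) (i j : ι) :
    ∃ k, k ≠ i ∧ k ≠ j :=
  ENat.exists_ne_ne_of_three_le (by simpa using mod_cast hι) i j

lemma IsSteinberg.mem_iSup_blockSubgroup {G : Type*} [Group G] {e : ι → ι → G}
    (he : IsSteinberg e) {β : ι → Fin 3} (hβ : Function.Surjective β) {i j : ι} (hij : i ≠ j) :
    e i j ∈ ⨆ v, blockSubgroup e β (rootSource v) (rootTarget v) := by
  have hne {i j : ι} (h : β i ≠ β j) :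
      e i j ∈ ⨆ v, blockSubgroup e β (rootSource v) (rootTarget v) := by
    obtain ⟨v, hs, ht⟩ := exists_rootSource_eq_rootTarget_eq _ _ h
    exact Subgroup.mem_iSup_of_mem v (hs ▸ ht ▸ mem_blockSubgroup e β i j)
  by_cases h : β i = β j
  · obtain ⟨a, ha⟩ := exists_ne (β i)
    obtain ⟨k, rfl⟩ := hβ a
    rw [← he.commutator (ne_of_apply_ne β ha.symm) (ne_of_apply_ne β (h ▸ ha)) hij,
      commutatorElement_def]
    have hik := hne ha.symm
    have hkj := hne (h ▸ ha)
    exact mul_mem (mul_mem (mul_mem hik hkj) (inv_mem hik)) (inv_mem hkj)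
  · exact hne h

theorem IsSteinberg.exists_forall_apply_eq [FiniteDimensional ℝ V] [Fintype ι]
    (hι : 3 ≤ Fintype.card ι) {e : ι → ι → V ≃ᵃⁱ[ℝ] V} (he : IsSteinberg e)
    (hfin : ∀ i j, IsOfFinOrder (linearPart (e i j))) :
    ∃ p : V, ∀ i j, i ≠ j → e i j ∈ pointStabilizer p := by
  have hord {i k : ι} (hik : i ≠ k) : IsOfFinOrder (e i k) := by
    obtain ⟨j, hji, hjk⟩ := exists_ne_ne_of_three_le_card hι i k
    exact he.isOfFinOrder hfin hji.symm hjk hik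
  obtain ⟨ε⟩ : Nonempty (Fin 3 ↪ ι) := Function.Embedding.nonempty_of_card_le (by simpa using hι)
  obtain ⟨β, hβ⟩ := Function.exists_surjective_iff.2 ⟨⟨fun _ : ι ↦ (0 : Fin 3)⟩, ⟨ε⟩⟩
  have hX := he.isA2Grading hβ
  have hX_fin (v) := he.finite_blockSubgroup hord (β := β) (rootSource_ne_rootTarget v)
  obtain ⟨p, hp⟩ := hX.exists_forall_le_pointStabilizer fun v ↦
    have := hX.finite_sup v
    exists_le_pointStabilizer_of_finite _
  exact ⟨p, fun i j hij ↦ iSup_le hp (he.mem_iSup_blockSubgroup hβ hij)⟩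

end SteinbergFixedPoint

section InducedAction

variable {G : Type*} [Group G] {Γ : Subgroup G}

/-- The isometric representation of the permutations of `ι` on `EuclideanSpace ℝ ι`. -/
def permRepresentation (ι : Type*) [Fintype ι] :
    Equiv.Perm ι →* (EuclideanSpace ℝ ι ≃ₗᵢ[ℝ] EuclideanSpace ℝ ι) where
  toFun := LinearIsometryEquiv.piLpCongrLeft 2 ℝ ℝ
  map_one' := rfl
  map_mul' _ _ := by ext; rfl

/-- An extension `F` of the real-valued homomorphism `f` on `Γ` to a function on the whole group
that satisfies `F (x * γ) = F x + f γ`. -/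
def equivariantExtension (f : Γ →* Multiplicative ℝ) (x : G) : ℝ :=
  (f ⟨(x : G ⧸ Γ).out⁻¹ * x, QuotientGroup.eq.1 (QuotientGroup.out_eq' _)⟩).toAdd

lemma equivariantExtension_mul (f : Γ →* Multiplicative ℝ) (x : G) (γ : Γ) :
    equivariantExtension f (x * γ) = equivariantExtension f x + (f γ).toAdd := by
  simp only [equivariantExtension, QuotientGroup.mk_mul_of_mem x γ.2, ← mul_assoc, ← toAdd_mul,
    ← map_mul]
  rfl

/-- The translation part of the induced affine action: `g` acts on the space of functions `F` with
`F (x * γ) = F x + f γ` by left translation, and this space is identified with the functions on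
`G ⧸ Γ` by subtracting `equivariantExtension f`. -/
def inducedCocycle (f : Γ →* Multiplicative ℝ) (g : G) : EuclideanSpace ℝ (G ⧸ Γ) :=
  WithLp.toLp 2 fun q ↦ equivariantExtension f (g⁻¹ * q.out) - equivariantExtension f q.out

lemma inducedCocycle_mk (f : Γ →* Multiplicative ℝ) (g x : G) :
    inducedCocycle f g (x : G ⧸ Γ)
      = equivariantExtension f (g⁻¹ * x) - equivariantExtension f x := by
  obtain ⟨γ, hγ⟩ := QuotientGroup.mk_out_eq_mul Γ x
  simp only [inducedCocycle, hγ, ← mul_assoc, equivariantExtension_mul, add_sub_add_right_eq_sub]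

variable [Fintype (G ⧸ Γ)]

/-- The affine isometry by which `g` acts in the affine action of `G` on `EuclideanSpace ℝ (G ⧸ Γ)`
induced from the action of `Γ` on `ℝ` by the translations `f`. -/
def inducedIsometry (f : Γ →* Multiplicative ℝ) (g : G) :
    EuclideanSpace ℝ (G ⧸ Γ) ≃ᵃⁱ[ℝ] EuclideanSpace ℝ (G ⧸ Γ) :=
  (permRepresentation _ (MulAction.toPermHom G (G ⧸ Γ) g)).toAffineIsometryEquiv.trans
    (.constVAdd ℝ _ (inducedCocycle f g))

lemma inducedIsometry_apply_mk (f : Γ →* Multiplicative ℝ) (g x : G)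
    (v : EuclideanSpace ℝ (G ⧸ Γ)) :
    inducedIsometry f g v (x : G ⧸ Γ) = v ((g⁻¹ * x : G) : G ⧸ Γ)
      + (equivariantExtension f (g⁻¹ * x) - equivariantExtension f x) := by
  rw [← inducedCocycle_mk, add_comm]
  rfl

/-- The affine isometric action of `G` on `EuclideanSpace ℝ (G ⧸ Γ)` induced from the action of `Γ`
on `ℝ` by the translations `f`. -/
def inducedAction (f : Γ →* Multiplicative ℝ) :
    G →* (EuclideanSpace ℝ (G ⧸ Γ) ≃ᵃⁱ[ℝ] EuclideanSpace ℝ (G ⧸ Γ)) :=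
  MonoidHom.mk' (inducedIsometry f) fun g h ↦ by
    ext v q
    obtain ⟨x, rfl⟩ := QuotientGroup.mk_surjective q
    rw [AffineIsometryEquiv.coe_mul, Function.comp_apply, inducedIsometry_apply_mk,
      inducedIsometry_apply_mk, inducedIsometry_apply_mk, mul_inv_rev, mul_assoc]
    ring

lemma isOfFinOrder_linearPart_inducedAction (f : Γ →* Multiplicative ℝ) (g : G) :
    IsOfFinOrder (linearPart (inducedAction f g)) := by
  have h : linearPart (inducedAction f g)
      = permRepresentation _ (MulAction.toPermHom G (G ⧸ Γ) g) := by ext; rfl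
  rw [h]
  exact (permRepresentation _).isOfFinOrder (isOfFinOrder_of_finite _)

lemma eq_one_of_inducedAction_mem_pointStabilizer {f : Γ →* Multiplicative ℝ} {γ : Γ}
    {p : EuclideanSpace ℝ (G ⧸ Γ)} (h : inducedAction f γ ∈ pointStabilizer p) : f γ = 1 := by
  have hcoset : (((γ : G)⁻¹ * 1 : G) : G ⧸ Γ) = (1 : G) := by
    rw [mul_one, QuotientGroup.eq]; simp
  have hγ : inducedIsometry f γ p ((1 : G) : G ⧸ Γ) = p ((1 : G) : G ⧸ Γ) :=
    congrArg (· ((1 : G) : G ⧸ Γ)) h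
  rw [inducedIsometry_apply_mk, hcoset, add_eq_left, sub_eq_zero, mul_one] at hγ
  have hext := equivariantExtension_mul f (γ : G)⁻¹ γ
  rwa [inv_mul_cancel, hγ, left_eq_add] at hext

end InducedAction

theorem IsSteinberg.eq_one_of_mem_closure {G ι : Type*} [Group G] [Fintype ι]
    (hι : 3 ≤ Fintype.card ι) {e : ι → ι → G} (he : IsSteinberg e) {Γ : Subgroup G} [Γ.FiniteIndex]
    (f : Γ →* Multiplicative ℝ) {γ : Γ}
    (hγ : (γ : G) ∈ Subgroup.closure {x | ∃ i j, i ≠ j ∧ e i j = x}) : f γ = 1 := by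
  have := Fintype.ofFinite (G ⧸ Γ)
  obtain ⟨p, hp⟩ := (he.map (inducedAction f)).exists_forall_apply_eq hι fun _ _ ↦
    isOfFinOrder_linearPart_inducedAction f _
  have hle : Subgroup.closure {x | ∃ i j, i ≠ j ∧ e i j = x}
      ≤ (pointStabilizer p).comap (inducedAction f) :=
    (Subgroup.closure_le _).2 fun _ ⟨i, j, hij, h⟩ ↦ h ▸ hp i j hij
  exact eq_one_of_inducedAction_mem_pointStabilizer (hle hγ)

section FiniteIndex

variable {G A : Type*} [Group G] [CommGroup A] {Γ : Subgroup G}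

lemma pow_index_normalCore_mem (Γ : Subgroup G) (x : G) : x ^ Γ.normalCore.index ∈ Γ :=
  Γ.normalCore_le (Subgroup.pow_index_mem _ x)

lemma eq_one_of_forall_mem_eq_one [IsMulTorsionFree A] (N : Subgroup G) [N.FiniteIndex]
    {f : Γ →* A} (hf : ∀ γ : Γ, (γ : G) ∈ N → f γ = 1) : f = 1 := by
  ext γ
  rw [MonoidHom.one_apply,
    ← pow_eq_one_iff_left (n := N.normalCore.index) Subgroup.FiniteIndex.index_ne_zero, ← map_pow]
  exact hf _ (pow_index_normalCore_mem N γ)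

lemma mul_pow_mul_inv_mem_commutator {I : Subgroup G} (x y : I) (m : ℕ) :
    ((x * y) ^ m * (x ^ m * y ^ m)⁻¹ : G) ∈ ⁅I, I⁆ := by
  rw [← Subgroup.map_subtype_commutator]
  refine ⟨(x * y) ^ m * (x ^ m * y ^ m)⁻¹, ?_, rfl⟩
  rw [← Abelianization.ker_of, SetLike.mem_coe, MonoidHom.mem_ker]
  simp only [map_mul, map_pow, map_inv, mul_pow, mul_inv_cancel]

/-- The homomorphism `x ↦ f (x ^ m)` on `I`, where `m` is an exponent with `x ^ m ∈ Γ` for all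
`x`. It extends the `m`-th power of `f` on `I ⊓ Γ`. -/
def powIndexHom (I : Subgroup G) (f : Γ →* A) (hf : ⁅I, I⁆.subgroupOf Γ ≤ f.ker) : I →* A :=
  MonoidHom.mk' (fun x ↦ f ⟨(x : G) ^ Γ.normalCore.index, pow_index_normalCore_mem Γ x⟩)
    fun x y ↦ by
      rw [← map_mul, ← mul_inv_eq_one, ← map_inv, ← map_mul]
      exact hf (mul_pow_mul_inv_mem_commutator x y _)

variable {I : Subgroup G} {f : Γ →* A} {hf : ⁅I, I⁆.subgroupOf Γ ≤ f.ker}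

lemma powIndexHom_apply_of_mem {x : I} (hx : (x : G) ∈ Γ) :
    powIndexHom I f hf x = f ⟨x, hx⟩ ^ Γ.normalCore.index :=
  map_pow f ⟨x, hx⟩ _

lemma powIndexHom_eq_of_conj {x y : I} {γ : G} (hγ : γ ∈ Γ) (h : γ * x * γ⁻¹ = y) :
    powIndexHom I f hf y = powIndexHom I f hf x := by
  have conj : f (⟨γ, hγ⟩ * ⟨(x : G) ^ Γ.normalCore.index, pow_index_normalCore_mem Γ x⟩ *
      ⟨γ, hγ⟩⁻¹) = powIndexHom I f hf x := by
    rw [map_mul, map_mul, map_inv, mul_comm (f ⟨γ, hγ⟩), mul_inv_cancel_right]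
    rfl
  rw [← conj]
  exact congrArg f (Subtype.ext (by simp [← h]))

lemma pow_conj_eq_mul_pow {R x y : G} (h : R * x * R⁻¹ = x * y) (hy : Commute R y) (t : ℕ) :
    R ^ t * x * (R ^ t)⁻¹ = x * y ^ t := by
  induction t with
  | zero => simp
  | succ t ih =>
    calc R ^ (t + 1) * x * (R ^ (t + 1))⁻¹ = R ^ t * (R * x * R⁻¹) * (R ^ t)⁻¹ := by
          rw [pow_succ]; group
      _ = R ^ t * x * (y * (R ^ t)⁻¹) := by rw [h]; group
      _ = R ^ t * x * (R ^ t)⁻¹ * y := by rw [← (hy.pow_left t).inv_left.eq]; group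
      _ = x * y ^ (t + 1) := by rw [ih, pow_succ, mul_assoc]

variable [IsMulTorsionFree A] [Γ.FiniteIndex]

/- A power `R ^ m` lies in `Γ`, and conjugating by it turns `x` into `x * y ^ m`. -/
lemma powIndexHom_eq_one {x y : I} {R : G} (h : R * x * R⁻¹ = x * y) (hy : Commute R y) :
    powIndexHom I f hf y = 1 := by
  have index_ne_zero : Γ.normalCore.index ≠ 0 := Subgroup.FiniteIndex.index_ne_zero
  have conj := powIndexHom_eq_of_conj (f := f) (hf := hf) (y := x * y ^ Γ.normalCore.index)
    (pow_index_normalCore_mem Γ R) (pow_conj_eq_mul_pow h hy _)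
  rwa [map_mul, mul_eq_left, map_pow, pow_eq_one_iff_left index_ne_zero] at conj

theorem eq_one_of_mem_normalClosure [I.Normal] (hf : ⁅I, I⁆.subgroupOf Γ ≤ f.ker) {S : Set G}
    (hS : ∀ y ∈ S, y ∈ I ∧ ∃ x ∈ I, ∃ R, R * x * R⁻¹ = x * y ∧ Commute R y) {γ : Γ}
    (hγ : (γ : G) ∈ Subgroup.normalClosure S) : f γ = 1 := by
  have le_ker : Subgroup.normalClosure S ≤ (powIndexHom I f hf).ker.map I.subtype := by
    refine (Subgroup.closure_le _).2 fun z hz ↦ ?_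
    obtain ⟨y, hy, conj⟩ := Group.mem_conjugatesOfSet_iff.1 hz
    obtain ⟨g, rfl⟩ := isConj_iff.1 conj
    obtain ⟨hyI, x, hxI, R, h, comm⟩ := hS y hy
    have normal : I.Normal := inferInstance
    refine ⟨⟨g * y * g⁻¹, normal.conj_mem y hyI g⟩, ?_, rfl⟩
    refine powIndexHom_eq_one (x := ⟨g * x * g⁻¹, normal.conj_mem x hxI g⟩) (R := g * R * g⁻¹) ?_
      ((Commute.conj_iff g).2 comm)
    simpa only [map_mul, map_inv, MulAut.conj_apply] using congrArg (MulAut.conj g) h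
  obtain ⟨x, hx, hxγ⟩ := le_ker hγ
  have hxΓ : I.subtype x ∈ Γ := hxγ ▸ γ.2
  have pow_eq_one := (powIndexHom_apply_of_mem hxΓ).symm.trans hx
  rw [pow_eq_one_iff_left Subgroup.FiniteIndex.index_ne_zero] at pow_eq_one
  rw [← pow_eq_one]
  exact congrArg f (Subtype.ext hxγ.symm)

end FiniteIndex

lemma exists_map_eq_of_ker_le {G Q A : Type*} [Group G] [Group Q] [Group A] {Γ : Subgroup G}
    (π : G →* Q) (f : Γ →* A) (hf : π.ker.subgroupOf Γ ≤ f.ker) :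
    ∃ f' : Γ.map π →* A, ∀ γ, f' (π.subgroupMap Γ γ) = f γ := by
  have ker_le : (π.subgroupMap Γ).ker ≤ f.ker := fun γ hγ ↦ hf (congrArg Subtype.val hγ)
  exact ⟨(π.subgroupMap Γ).liftOfSurjective (π.subgroupMap_surjective Γ) ⟨f, ker_le⟩,
    MonoidHom.liftOfRightInverse_comp_apply _ _ _ ⟨f, ker_le⟩⟩

lemma subgroupOf_le_ker_of_le_commutator {G A : Type*} [Group G] [CommGroup A] {H Γ : Subgroup G}
    (h : H ≤ ⁅Γ, Γ⁆) (φ : Γ →* A) : H.subgroupOf Γ ≤ φ.ker := by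
  rw [← Subgroup.map_subtype_commutator] at h
  rw [Subgroup.subgroupOf, ← Subgroup.comap_map_eq_self_of_injective Γ.subtype_injective φ.ker]
  exact Subgroup.comap_mono
    (h.trans (Subgroup.map_mono (Abelianization.commutator_subset_ker φ)))

theorem finite_abelianization_of_forall_eq_one {G : Type*} [Group G] [Group.FG G]
    (hG : ∀ φ : G →* Multiplicative ℝ, φ = 1) : Finite (Abelianization G) := by
  have : Group.FG (Abelianization G) :=
    Group.fg_of_surjective (f := Abelianization.of) (QuotientGroup.mk'_surjective _)
  let M := Additive (Abelianization G)
  have : Module.Finite ℤ M := Module.Finite.iff_addGroup_fg.2 inferInstance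
  let b := Module.Free.chooseBasis ℤ (M ⧸ Submodule.torsion ℤ M)
  suffices torsion : Module.IsTorsion ℤ M from
    Finite.of_equiv M (h := Module.finite_of_fg_torsion M torsion) Additive.toMul
  intro x
  rw [← Submodule.mem_torsion_iff, ← Submodule.Quotient.mk_eq_zero]
  refine b.ext_elem fun i ↦ ?_
  let ψ : M →+ ℝ := (Int.castAddHom ℝ).comp
    ((b.coord i).comp (Submodule.mkQ _)).toAddMonoidHom
  obtain ⟨g, hg⟩ := QuotientGroup.mk'_surjective _ x.toMul
  have ψ_eq_zero : ψ x = 0 := by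
    rw [← ofMul_toMul x, ← hg]
    exact DFunLike.congr_fun (hG ((AddMonoidHom.toMultiplicativeRight ψ).comp Abelianization.of)) g
  rw [map_zero]
  exact Int.cast_eq_zero.1 ψ_eq_zero

section Transvections

variable {α : Type*}

lemma mulAut_freeGroup_ext {φ ψ : MulAut (FreeGroup α)}
    (h : ∀ k, φ (FreeGroup.of k) = ψ (FreeGroup.of k)) : φ = ψ :=
  MulEquiv.toMonoidHom_injective (FreeGroup.ext_hom _ _ h)

variable [DecidableEq α] {i j k l : α}

/-- The endomorphism of the free group sending the generator `i` to `w` and fixing the others. -/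
def updateHom (i : α) (w : FreeGroup α) : FreeGroup α →* FreeGroup α :=
  FreeGroup.lift (Function.update FreeGroup.of i w)

@[simp]
lemma updateHom_of_self (i : α) (w : FreeGroup α) : updateHom i w (FreeGroup.of i) = w := by
  simp [updateHom]

@[simp]
lemma updateHom_of_of_ne (h : k ≠ i) (w : FreeGroup α) :
    updateHom i w (FreeGroup.of k) = FreeGroup.of k := by
  simp [updateHom, h]

lemma updateHom_comp_updateHom {v w : FreeGroup α} (h : updateHom i v w = FreeGroup.of i) :
    (updateHom i v).comp (updateHom i w) = MonoidHom.id _ := by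
  refine FreeGroup.ext_hom _ _ fun k ↦ ?_
  obtain rfl | hk := eq_or_ne k i <;> simp [*]

/-- The automorphism of the free group sending the generator `i` to `x_i x_j` and fixing the other
generators. By convention it is the identity if `i = j`. -/
def rightMul (i j : α) : MulAut (FreeGroup α) :=
  if h : j = i then 1
  else MonoidHom.toMulEquiv (updateHom i (FreeGroup.of i * FreeGroup.of j))
    (updateHom i (FreeGroup.of i * (FreeGroup.of j)⁻¹))
    (updateHom_comp_updateHom (by simp [h])) (updateHom_comp_updateHom (by simp [h]))

/-- The automorphism of the free group sending the generator `i` to `x_j x_i` and fixing the other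
generators. By convention it is the identity if `i = j`. -/
def leftMul (i j : α) : MulAut (FreeGroup α) :=
  if h : j = i then 1
  else MonoidHom.toMulEquiv (updateHom i (FreeGroup.of j * FreeGroup.of i))
    (updateHom i ((FreeGroup.of j)⁻¹ * FreeGroup.of i))
    (updateHom_comp_updateHom (by simp [h])) (updateHom_comp_updateHom (by simp [h]))

@[simp]
lemma rightMul_of_self (h : j ≠ i) :
    rightMul i j (FreeGroup.of i) = FreeGroup.of i * FreeGroup.of j := by
  simp [rightMul, h]

@[simp]
lemma rightMul_of_of_ne (h : k ≠ i) : rightMul i j (FreeGroup.of k) = FreeGroup.of k := by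
  by_cases hj : j = i <;> simp [rightMul, h, hj]

@[simp]
lemma leftMul_of_self (h : j ≠ i) :
    leftMul i j (FreeGroup.of i) = FreeGroup.of j * FreeGroup.of i := by
  simp [leftMul, h]

@[simp]
lemma leftMul_of_of_ne (h : k ≠ i) : leftMul i j (FreeGroup.of k) = FreeGroup.of k := by
  by_cases hj : j = i <;> simp [leftMul, h, hj]

@[simp]
lemma rightMul_symm_of_self (h : j ≠ i) :
    (rightMul i j).symm (FreeGroup.of i) = FreeGroup.of i * (FreeGroup.of j)⁻¹ := by
  rw [MulEquiv.symm_apply_eq]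
  simp [h]

@[simp]
lemma rightMul_symm_of_of_ne (h : k ≠ i) :
    (rightMul i j).symm (FreeGroup.of k) = FreeGroup.of k := by
  rw [MulEquiv.symm_apply_eq, rightMul_of_of_ne h]

@[simp]
lemma leftMul_symm_of_self (h : j ≠ i) :
    (leftMul i j).symm (FreeGroup.of i) = (FreeGroup.of j)⁻¹ * FreeGroup.of i := by
  rw [MulEquiv.symm_apply_eq]
  simp [h]

@[simp]
lemma leftMul_symm_of_of_ne (h : k ≠ i) :
    (leftMul i j).symm (FreeGroup.of k) = FreeGroup.of k := by
  rw [MulEquiv.symm_apply_eq, leftMul_of_of_ne h]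

/-- The automorphism of the free group sending the generator `i` to `x_j⁻¹ x_i x_j` and fixing the
other generators. -/
def partialConj (i j : α) : MulAut (FreeGroup α) :=
  (leftMul i j)⁻¹ * rightMul i j

@[simp]
lemma partialConj_of_self (h : j ≠ i) :
    partialConj i j (FreeGroup.of i) = (FreeGroup.of j)⁻¹ * FreeGroup.of i * FreeGroup.of j := by
  simp [partialConj, h, mul_assoc]

@[simp]
lemma partialConj_of_of_ne (h : k ≠ i) :
    partialConj i j (FreeGroup.of k) = FreeGroup.of k := by
  simp [partialConj, h]

lemma commute_rightMul_leftMul (hji : j ≠ i) (hki : k ≠ i) :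
    Commute (rightMul i j) (leftMul i k) := by
  refine mulAut_freeGroup_ext fun m ↦ ?_
  obtain rfl | hm := eq_or_ne m i <;> simp [*, mul_assoc]

lemma commute_rightMul_rightMul (hik : i ≠ k) (hjk : j ≠ k) (hli : l ≠ i) :
    Commute (rightMul i j) (rightMul k l) := by
  obtain rfl | hji := eq_or_ne j i
  · simp [rightMul]
  obtain rfl | hlk := eq_or_ne l k
  · simp [rightMul]
  refine mulAut_freeGroup_ext fun m ↦ ?_
  obtain rfl | hmi := eq_or_ne m i
  · simp [*]
  obtain rfl | hmk := eq_or_ne m k <;> simp [*]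

lemma rightMul_mul_rightMul (hij : i ≠ j) (hjk : j ≠ k) (hik : i ≠ k) :
    rightMul j i * rightMul k j = rightMul k j * rightMul k i * rightMul j i := by
  refine mulAut_freeGroup_ext fun m ↦ ?_
  obtain rfl | hmj := eq_or_ne m j
  · simp [*]
  obtain rfl | hmk := eq_or_ne m k <;> simp [*, mul_assoc]

lemma rightMul_mul_partialConj (hij : i ≠ j) (hjk : j ≠ k) (hik : i ≠ k) :
    rightMul i k * partialConj j i = partialConj j i * partialConj j k * rightMul i k := by
  refine mulAut_freeGroup_ext fun m ↦ ?_
  obtain rfl | hmi := eq_or_ne m i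
  · simp [*, hik.symm, hjk.symm]
  obtain rfl | hmj := eq_or_ne m j <;> simp [*, hik.symm, hjk.symm, mul_assoc]

lemma commute_rightMul_partialConj (hij : i ≠ j) (hjk : j ≠ k) (hik : i ≠ k) :
    Commute (rightMul i k) (partialConj j k) := by
  refine mulAut_freeGroup_ext fun m ↦ ?_
  obtain rfl | hmi := eq_or_ne m i
  · simp [*, hik.symm, hjk.symm]
  obtain rfl | hmj := eq_or_ne m j <;> simp [*, hik.symm, hjk.symm]

end Transvections

lemma isReduced_invRev_append {α : Type*} {l m : List (α × Bool)}
    (hl : FreeGroup.IsReduced l) (hm : FreeGroup.IsReduced m) (h : ∀ s ∈ l.head?, s ∉ m.head?) :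
    FreeGroup.IsReduced (FreeGroup.invRev l ++ m) := by
  classical
  have invRev_reduced : FreeGroup.IsReduced (FreeGroup.invRev l) := by
    rw [FreeGroup.isReduced_iff_reduce_eq, FreeGroup.reduce_invRev, hl.reduce_eq]
  refine List.isChain_append.2 ⟨invRev_reduced, hm, fun s hs t ht hst ↦ ?_⟩
  obtain ⟨i, b⟩ := s
  obtain ⟨j, c⟩ := t
  obtain rfl : i = j := hst
  have hl' : (i, !b) ∈ l.head? := by simpa [FreeGroup.invRev] using hs
  by_contra hbc
  obtain rfl : c = !b := by simpa [eq_comm, Bool.eq_not] using hbc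
  exact h _ hl' ht

section Overlap

variable {α : Type*} [DecidableEq α] {g h x y z : FreeGroup α}

/-- The length of the longest common initial segment of the reduced words of `g` and `h`, which is
their Gromov product in the Cayley tree. -/
def overlap (g h : FreeGroup α) : ℕ :=
  Nat.findGreatest (fun k ↦ g.toWord.take k = h.toWord.take k) (min g.norm h.norm)

lemma le_overlap_iff {k : ℕ} :
    k ≤ overlap g h ↔ k ≤ g.norm ∧ k ≤ h.norm ∧ g.toWord.take k = h.toWord.take k := by
  refine ⟨fun hk ↦ ?_, fun ⟨hg, hh, take_eq⟩ ↦ Nat.le_findGreatest (le_min hg hh) take_eq⟩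
  have le_min := hk.trans (Nat.findGreatest_le _)
  have take_eq : g.toWord.take (overlap g h) = h.toWord.take (overlap g h) :=
    Nat.findGreatest_spec (P := fun k ↦ g.toWord.take k = h.toWord.take k) (Nat.zero_le _) rfl
  refine ⟨le_min.trans (min_le_left _ _), le_min.trans (min_le_right _ _), ?_⟩
  simpa only [List.take_take, min_eq_left hk] using congrArg (List.take k) take_eq

lemma overlap_le_left : overlap g h ≤ g.norm := (le_overlap_iff.1 le_rfl).1

lemma overlap_le_right : overlap g h ≤ h.norm := (le_overlap_iff.1 le_rfl).2.1

lemma take_overlap : g.toWord.take (overlap g h) = h.toWord.take (overlap g h) :=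
  (le_overlap_iff.1 le_rfl).2.2

lemma overlap_comm (g h : FreeGroup α) : overlap g h = overlap h g :=
  eq_of_forall_le_iff fun k ↦ by simp only [le_overlap_iff, eq_comm, and_left_comm]

lemma min_overlap_le : min (overlap x y) (overlap y z) ≤ overlap x z :=
  have ⟨hx, _, hxy⟩ := le_overlap_iff.1 (min_le_left (overlap x y) (overlap y z))
  have ⟨_, hz, hyz⟩ := le_overlap_iff.1 (min_le_right (overlap x y) (overlap y z))
  le_overlap_iff.2 ⟨hx, hz, hxy.trans hyz⟩

lemma overlap_eq_of_lt (h : overlap y z < overlap x y) : overlap x z = overlap y z := by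
  have h₁ := min_overlap_le (x := x) (y := y) (z := z)
  have h₂ := min_overlap_le (x := y) (y := x) (z := z)
  rw [overlap_comm y x] at h₂
  omega

lemma toWord_inv_mul (g h : FreeGroup α) :
    (g⁻¹ * h).toWord =
      FreeGroup.invRev (g.toWord.drop (overlap g h)) ++ h.toWord.drop (overlap g h) := by
  have eq_mk : g⁻¹ * h =
      .mk (FreeGroup.invRev (g.toWord.drop (overlap g h)) ++ h.toWord.drop (overlap g h)) := by
    have eq_mul (x : FreeGroup α) (k : ℕ) :
        FreeGroup.mk (x.toWord.take k) * FreeGroup.mk (x.toWord.drop k) = x := by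
      rw [FreeGroup.mul_mk, List.take_append_drop, FreeGroup.mk_toWord]
    rw [← FreeGroup.mul_mk, ← FreeGroup.inv_mk]
    have hg := eq_mul g (overlap g h)
    rw [take_overlap] at hg
    calc g⁻¹ * h = (.mk (h.toWord.take (overlap g h)) * .mk (g.toWord.drop (overlap g h)))⁻¹ *
          (.mk (h.toWord.take (overlap g h)) * .mk (h.toWord.drop (overlap g h))) := by
          rw [hg, eq_mul]
      _ = (.mk (g.toWord.drop (overlap g h)))⁻¹ * .mk (h.toWord.drop (overlap g h)) := by group
  have reduced : FreeGroup.IsReduced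
      (FreeGroup.invRev (g.toWord.drop (overlap g h)) ++ h.toWord.drop (overlap g h)) := by
    have drop_reduced (x : FreeGroup α) (k : ℕ) : FreeGroup.IsReduced (x.toWord.drop k) :=
      FreeGroup.isReduced_toWord.drop k
    refine isReduced_invRev_append (drop_reduced _ _) (drop_reduced _ _) fun s hg hh ↦ ?_
    rw [List.head?_drop] at hg hh
    refine (overlap g h).lt_succ_self.not_ge (le_overlap_iff.2 ⟨?_, ?_, ?_⟩)
    · exact (List.getElem?_eq_some_iff.1 hg).1
    · exact (List.getElem?_eq_some_iff.1 hh).1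
    · rw [List.take_add_one, List.take_add_one, take_overlap, hg, hh]
  conv_lhs => rw [eq_mk]
  rw [FreeGroup.toWord_mk, reduced.reduce_eq]

lemma norm_inv_mul (g h : FreeGroup α) :
    (g⁻¹ * h).norm + 2 * overlap g h = g.norm + h.norm := by
  have hg : overlap g h ≤ g.toWord.length := overlap_le_left
  have hh : overlap g h ≤ h.toWord.length := overlap_le_right
  simp only [FreeGroup.norm, toWord_inv_mul, List.length_append, FreeGroup.invRev_length,
    List.length_drop]
  omega

lemma invRev_drop_toWord (g : FreeGroup α) (k : ℕ) :
    FreeGroup.invRev (g.toWord.drop k) = g⁻¹.toWord.take (g.norm - k) := by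
  rw [FreeGroup.toWord_inv, FreeGroup.invRev, FreeGroup.invRev, List.map_drop, List.reverse_drop,
    List.length_map, FreeGroup.norm]

/- If the first half of `g` is also the first half of `g⁻¹`, then `g = g⁻¹`. -/
lemma two_mul_overlap_inv_lt (hg : g ≠ 1) : 2 * overlap g g⁻¹ < g.norm := by
  by_contra! hle
  have drop_eq : g.toWord.drop (overlap g g⁻¹) = g⁻¹.toWord.drop (overlap g g⁻¹) := by
    have le_overlap : g.norm - overlap g g⁻¹ ≤ overlap g g⁻¹ := by omega
    have take_eq := (le_overlap_iff.1 le_overlap).2.2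
    apply FreeGroup.invRev_injective
    rw [invRev_drop_toWord, invRev_drop_toWord, inv_inv, FreeGroup.norm_inv_eq, take_eq]
  refine hg (self_eq_inv.1 (FreeGroup.toWord_injective ?_))
  rw [← List.take_append_drop (overlap g g⁻¹) g.toWord, drop_eq, take_overlap,
    List.take_append_drop]

end Overlap

section NielsenReduced

variable {α β : Type*} [DecidableEq α]

/-- The element of the free group represented by the one-letter word `s`. -/
def letter (s : β × Bool) : FreeGroup β := FreeGroup.mk [s]

lemma letter_true (i : β) : letter (i, true) = FreeGroup.of i := rfl

lemma letter_false (i : β) : letter (i, false) = (FreeGroup.of i)⁻¹ := rfl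

lemma letter_ne_one : ∀ s : β × Bool, letter s ≠ 1
  | (i, true) => FreeGroup.of_ne_one i
  | (i, false) => inv_ne_one.2 (FreeGroup.of_ne_one i)

/-- The letter inverse to `s`. -/
def invLetter (s : β × Bool) : β × Bool := (s.1, !s.2)

lemma letter_invLetter (s : β × Bool) : letter (invLetter s) = (letter s)⁻¹ := rfl

lemma eq_invLetter {s t : β × Bool} (hst : s ≠ t) (h : s.1 = t.1) : s = invLetter t :=
  Prod.ext h (Bool.eq_not_iff.2 fun h' ↦ hst (Prod.ext h h'))

lemma invLetter_ne (s : β × Bool) : invLetter s ≠ s := by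
  simp [invLetter, Prod.ext_iff]

lemma mk_cons (s : β × Bool) (L : List (β × Bool)) :
    FreeGroup.mk (s :: L) = letter s * FreeGroup.mk L := by
  rw [letter, FreeGroup.mul_mk, List.singleton_append]

/-- Nielsen's condition on the images of the letters under `φ`: each of them retains an uncancelled
piece in every product along a reduced word. -/
def IsNielsenReduced (φ : FreeGroup β →* FreeGroup α) : Prop :=
  ∀ s t u : β × Bool, s ≠ t → u ≠ invLetter t →
    overlap (φ (letter s)) (φ (letter t)) + overlap (φ (letter t))⁻¹ (φ (letter u)) <
      (φ (letter t)).norm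

lemma invLetter_ne_of_isReduced_cons_cons {s t : β × Bool} {L : List (β × Bool)}
    (h : FreeGroup.IsReduced (s :: t :: L)) : invLetter s ≠ t := by
  rintro rfl
  simpa [invLetter] using (List.isChain_cons_cons.1 h).1

lemma IsNielsenReduced.overlap_eq_and_length_le {φ : FreeGroup β →* FreeGroup α}
    (hφ : IsNielsenReduced φ) {s : β × Bool} {L : List (β × Bool)}
    (hL : FreeGroup.IsReduced (s :: L)) {t : β × Bool} (ht : t ≠ s) :
    overlap (φ (.mk (s :: L))) (φ (letter t)) = overlap (φ (letter s)) (φ (letter t)) ∧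
      L.length + 1 + overlap (φ (letter s)) (φ (letter t)) ≤ (φ (.mk (s :: L))).norm := by
  induction L generalizing s t with
  | nil =>
    have lt_norm := hφ t s s ht (invLetter_ne s).symm
    rw [overlap_comm] at lt_norm
    refine ⟨rfl, ?_⟩
    change 0 + 1 + overlap (φ (letter s)) (φ (letter t)) ≤ (φ (letter s)).norm
    omega
  | cons s' L ih =>
    have hne := invLetter_ne_of_isReduced_cons_cons hL
    obtain ⟨overlap_eq, length_le⟩ := ih (List.IsChain.of_cons hL) hne
    rw [letter_invLetter, map_inv] at overlap_eq length_le
    have norm_mul := norm_inv_mul (φ (letter s))⁻¹ (φ (.mk (s' :: L)))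
    rw [overlap_comm, overlap_eq, inv_inv, FreeGroup.norm_inv_eq, ← map_mul, ← mk_cons] at norm_mul
    have norm_div := norm_inv_mul (φ (.mk (s :: s' :: L))) (φ (letter s))
    rw [mk_cons s, map_mul, mul_inv_rev, inv_mul_cancel_right, FreeGroup.norm_inv_eq, ← map_mul,
      ← mk_cons] at norm_div
    have lt_norm := hφ t s s' ht hne.symm
    rw [overlap_comm (φ (letter t)), overlap_comm (φ (letter s))⁻¹] at lt_norm
    refine ⟨overlap_eq_of_lt ?_, ?_⟩
    · omega
    · rw [List.length_cons]
      omega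

lemma IsNielsenReduced.norm_le_norm_apply [DecidableEq β] {φ : FreeGroup β →* FreeGroup α}
    (hφ : IsNielsenReduced φ) (x : FreeGroup β) : x.norm ≤ (φ x).norm := by
  have reduced : FreeGroup.IsReduced x.toWord := FreeGroup.isReduced_toWord
  rcases hx : x.toWord with _ | ⟨s, L⟩
  · rw [FreeGroup.norm, hx]
    exact Nat.zero_le _
  · have length_le := (hφ.overlap_eq_and_length_le (hx ▸ reduced) (invLetter_ne s)).2
    rw [← hx, FreeGroup.mk_toWord] at length_le
    rw [FreeGroup.norm, hx, List.length_cons]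
    omega

lemma finite_setOf_isNielsenReduced [Finite α] :
    {φ : MulAut (FreeGroup α) | IsNielsenReduced φ.toMonoidHom}.Finite := by
  have finite_ball : {x : FreeGroup α | x.norm ≤ 1}.Finite :=
    (List.finite_length_le (α × Bool) 1).preimage FreeGroup.toWord_injective.injOn
  have finite_pi : {f : α → FreeGroup α | ∀ a, f a ∈ {x : FreeGroup α | x.norm ≤ 1}}.Finite :=
    Set.Finite.pi' fun _ ↦ finite_ball
  refine Set.Finite.of_injOn (f := fun φ a ↦ φ⁻¹ (FreeGroup.of a)) ?_ ?_ finite_pi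
  · intro φ hφ a
    have norm_le := hφ.norm_le_norm_apply (φ⁻¹ (FreeGroup.of a))
    rwa [MulEquiv.coe_toMonoidHom, MulAut.apply_inv_self, FreeGroup.norm_of] at norm_le
  · intro φ _ ψ _ h
    exact inv_injective (mulAut_freeGroup_ext (congrFun h))

end NielsenReduced

section Complexity

/-- The rank of a word over a finite alphabet in an enumeration that is injective on the words of
each length. The first letters are the least significant ones. -/
def listRank {γ : Type*} [Fintype γ] (l : List γ) : ℕ :=
  Nat.ofDigits (Fintype.card γ + 2) (l.map fun s ↦ (Fintype.equivFin γ s : ℕ))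

lemma listRank_append {γ : Type*} [Fintype γ] (l m : List γ) :
    listRank (l ++ m) = listRank l + (Fintype.card γ + 2) ^ l.length * listRank m := by
  rw [listRank, List.map_append, Nat.ofDigits_append, List.length_map, listRank, listRank]

lemma eq_of_listRank_eq {γ : Type*} [Fintype γ] {l m : List γ} (hlen : l.length = m.length)
    (h : listRank l = listRank m) : l = m := by
  have digit_lt (l : List γ) : ∀ d ∈ l.map fun s ↦ (Fintype.equivFin γ s : ℕ),
      d < Fintype.card γ + 2 := by
    simp only [List.mem_map]
    rintro _ ⟨s, _, rfl⟩
    exact (Fintype.equivFin γ s).2.trans_le (Nat.le_add_right _ _)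
  refine List.map_injective_iff.2 (Fin.val_injective.comp (Fintype.equivFin γ).injective) ?_
  exact Nat.ofDigits_inj_of_len_eq (Nat.one_lt_succ_succ _) (by simpa using hlen)
    (digit_lt l) (digit_lt m) h

variable {α : Type*} [DecidableEq α] [Fintype α] {x y : FreeGroup α}

/-- The rank of the first half of the reduced word of `x`. -/
def halfRank (x : FreeGroup α) : ℕ := listRank (x.toWord.take (x.norm / 2))

/-- The quantity minimized lexicographically in Nielsen reduction: the length of `x`, followed by a
tie-break comparing the first halves of `x` and `x⁻¹`. -/
def complexity (x : FreeGroup α) : ℕ ×ₗ ℕ := toLex (x.norm, halfRank x + halfRank x⁻¹)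

lemma complexity_inv (x : FreeGroup α) : complexity x⁻¹ = complexity x := by
  rw [complexity, complexity, FreeGroup.norm_inv_eq, inv_inv, add_comm]

lemma complexity_le_iff : complexity x ≤ complexity y ↔
    x.norm < y.norm ∨ x.norm = y.norm ∧ halfRank x + halfRank x⁻¹ ≤ halfRank y + halfRank y⁻¹ :=
  Prod.Lex.toLex_le_toLex

lemma norm_le_of_complexity_le (h : complexity x ≤ complexity y) : x.norm ≤ y.norm :=
  (complexity_le_iff.1 h).elim le_of_lt fun h ↦ h.1.le

lemma listRank_le_of_complexity_le {p q a : List (α × Bool)} (hx : x.toWord = p ++ a)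
    (hy : y.toWord = q ++ a) (hpq : p.length = q.length) (hpa : p.length ≤ a.length)
    (h : complexity x ≤ complexity y) : listRank p ≤ listRank q := by
  have norm_x : x.norm = p.length + a.length := by rw [FreeGroup.norm, hx, List.length_append]
  have norm_y : y.norm = p.length + a.length := by
    rw [FreeGroup.norm, hy, List.length_append, hpq]
  have take_inv : x⁻¹.toWord.take (x.norm / 2) = y⁻¹.toWord.take (y.norm / 2) := by
    rw [FreeGroup.toWord_inv, FreeGroup.toWord_inv, hx, hy, FreeGroup.invRev_append,
      FreeGroup.invRev_append, List.take_append_of_le_length, List.take_append_of_le_length,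
      norm_x, norm_y] <;> rw [FreeGroup.invRev_length] <;> omega
  have take_x : x.toWord.take (x.norm / 2) = p ++ a.take (x.norm / 2 - p.length) := by
    rw [hx, List.take_append, List.take_of_length_le (by omega)]
  have take_y : y.toWord.take (y.norm / 2) = q ++ a.take (x.norm / 2 - p.length) := by
    rw [hy, List.take_append, List.take_of_length_le (by omega), hpq, norm_x, norm_y]
  have := complexity_le_iff.1 h
  simp only [halfRank, FreeGroup.norm_inv_eq, take_inv, take_x, take_y, listRank_append,
    hpq] at this
  omega

lemma two_mul_overlap_le (h : complexity x ≤ complexity (x⁻¹ * y)) :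
    2 * overlap x y ≤ y.norm := by
  have norm_le := norm_le_of_complexity_le h
  have norm_mul := norm_inv_mul x y
  omega

/- Here `y⁻¹ * x` arises from `x` by replacing the first half of `y` by that of `y⁻¹`. -/
lemma halfRank_le_halfRank_inv (hxy : complexity x ≤ complexity (x⁻¹ * y))
    (hyx : complexity y ≤ complexity (y⁻¹ * x)) (h : 2 * overlap x y = y.norm) :
    halfRank y ≤ halfRank y⁻¹ := by
  have overlap_le := two_mul_overlap_le hyx
  rw [overlap_comm] at overlap_le
  have half : y.norm / 2 = overlap x y := by omega
  have norm_sub : y.norm - overlap x y = overlap x y := by omega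
  have norm_inv : y⁻¹.norm = y.norm := FreeGroup.norm_inv_eq
  rw [halfRank, halfRank, norm_inv, half]
  refine listRank_le_of_complexity_le (x := x) (y := y⁻¹ * x) (a := x.toWord.drop (overlap x y))
    ?_ ?_ ?_ ?_ ?_
  · rw [← take_overlap, List.take_append_drop]
  · rw [toWord_inv_mul, overlap_comm y, invRev_drop_toWord, norm_sub]
  · rw [List.length_take, List.length_take, ← FreeGroup.norm, ← FreeGroup.norm, norm_inv]
  · rw [List.length_take, List.length_drop, ← FreeGroup.norm, ← FreeGroup.norm]
    omega
  · rwa [← complexity_inv (y⁻¹ * x), mul_inv_rev, inv_inv]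

lemma halfRank_ne_halfRank_inv (hy : y ≠ 1) (hnorm : Even y.norm) :
    halfRank y ≠ halfRank y⁻¹ := by
  intro h
  have norm_inv : y⁻¹.norm = y.norm := FreeGroup.norm_inv_eq
  rw [halfRank, halfRank, norm_inv] at h
  have take_eq := eq_of_listRank_eq (by
    rw [List.length_take, List.length_take, ← FreeGroup.norm, ← FreeGroup.norm, norm_inv]) h
  have le_overlap := le_overlap_iff.2 ⟨by omega, by omega, take_eq⟩
  have lt_norm := two_mul_overlap_inv_lt hy
  have := hnorm.two_dvd
  omega

theorem isNielsenReduced_of_complexity_le {β : Type*} {φ : FreeGroup β →* FreeGroup α}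
    (hφ : Function.Injective φ)
    (h : ∀ s t : β × Bool, s.1 ≠ t.1 →
      complexity (φ (letter s)) ≤ complexity (φ (letter s) * φ (letter t))) :
    IsNielsenReduced φ := by
  have ne_one (s : β × Bool) : φ (letter s) ≠ 1 :=
    (map_ne_one_iff φ hφ).2 (letter_ne_one s)
  have le_inv_mul {s t : β × Bool} (hst : s.1 ≠ t.1) :
      complexity (φ (letter s)) ≤ complexity ((φ (letter s))⁻¹ * φ (letter t)) := by
    simpa only [letter_invLetter, map_inv, complexity_inv] using h (invLetter s) t hst
  have overlap_le {s t : β × Bool} (hst : s ≠ t) :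
      2 * overlap (φ (letter s)) (φ (letter t)) ≤ (φ (letter t)).norm ∧
        (2 * overlap (φ (letter s)) (φ (letter t)) = (φ (letter t)).norm →
          halfRank (φ (letter t)) ≤ halfRank (φ (letter t))⁻¹) := by
    by_cases hst' : s.1 = t.1
    · obtain rfl : s = invLetter t := eq_invLetter hst hst'
      have overlap_lt := two_mul_overlap_inv_lt (ne_one t)
      rw [letter_invLetter, map_inv, overlap_comm]
      omega
    · exact ⟨two_mul_overlap_le (le_inv_mul hst'),
        halfRank_le_halfRank_inv (le_inv_mul hst') (le_inv_mul (Ne.symm hst'))⟩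
  intro s t u hst hut
  obtain ⟨le_left, rank_le⟩ := overlap_le hst
  obtain ⟨le_right, rank_inv_le⟩ := overlap_le hut
  rw [letter_invLetter, map_inv, FreeGroup.norm_inv_eq, inv_inv, overlap_comm] at rank_inv_le
  rw [letter_invLetter, map_inv, FreeGroup.norm_inv_eq, overlap_comm] at le_right
  by_contra! hle
  have even : Even (φ (letter t)).norm := ⟨overlap (φ (letter s)) (φ (letter t)), by omega⟩
  exact halfRank_ne_halfRank_inv (ne_one t) even
    ((rank_le (by omega)).antisymm (rank_inv_le (by omega)))

end Complexity

section Nielsen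

variable {α : Type*} [DecidableEq α]

/-- The transvections, or Nielsen moves: the automorphisms of the free group multiplying one
generator by another one. -/
def transvections (α : Type*) [DecidableEq α] : Set (MulAut (FreeGroup α)) :=
  {φ | ∃ i j, i ≠ j ∧ (φ = rightMul i j ∨ φ = leftMul i j)}

/-- The subgroup of the automorphism group of the free group generated by the transvections. -/
def transvectionSubgroup (α : Type*) [DecidableEq α] : Subgroup (MulAut (FreeGroup α)) :=
  Subgroup.closure (transvections α)

lemma finite_transvections [Finite α] : (transvections α).Finite := by
  refine ((Set.finite_range fun p : α × α ↦ rightMul p.1 p.2).union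
    (Set.finite_range fun p : α × α ↦ leftMul p.1 p.2)).subset ?_
  rintro _ ⟨i, j, _, rfl | rfl⟩
  · exact Or.inl ⟨(i, j), rfl⟩
  · exact Or.inr ⟨(i, j), rfl⟩

lemma exists_mem_transvectionSubgroup_letter {s t : α × Bool} (hst : s.1 ≠ t.1) :
    ∃ h ∈ transvectionSubgroup α, h (letter s) = letter s * letter t ∧
      ∀ i ≠ s.1, h (FreeGroup.of i) = FreeGroup.of i := by
  obtain ⟨i, a⟩ := s
  obtain ⟨j, b⟩ := t
  have right_mem : rightMul i j ∈ transvectionSubgroup α :=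
    Subgroup.subset_closure ⟨i, j, hst, Or.inl rfl⟩
  have left_mem : leftMul i j ∈ transvectionSubgroup α :=
    Subgroup.subset_closure ⟨i, j, hst, Or.inr rfl⟩
  have hji : j ≠ i := hst.symm
  cases a <;> cases b
  · exact ⟨_, left_mem, by simp [letter_false, hji], fun k hk ↦ leftMul_of_of_ne hk⟩
  · exact ⟨_, inv_mem left_mem, by simp [letter_false, letter_true, hji],
      fun k hk ↦ leftMul_symm_of_of_ne hk⟩
  · exact ⟨_, inv_mem right_mem, by simp [letter_false, letter_true, hji],
      fun k hk ↦ rightMul_symm_of_of_ne hk⟩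
  · exact ⟨_, right_mem, by simp [letter_true, hji], fun k hk ↦ rightMul_of_of_ne hk⟩

section TotalComplexity

variable [Fintype α]

/-- The total complexity of the images of the generators, which Nielsen moves can decrease as long
as the automorphism is not Nielsen reduced. -/
def totalComplexity (φ : MulAut (FreeGroup α)) : ℕ ×ₗ ℕ :=
  ∑ i, complexity (φ (FreeGroup.of i))

lemma complexity_apply_letter (φ : MulAut (FreeGroup α)) (s : α × Bool) :
    complexity (φ (letter s)) = complexity (φ (FreeGroup.of s.1)) := by
  obtain ⟨i, _ | _⟩ := s
  · rw [letter_false, map_inv, complexity_inv]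
  · rw [letter_true]

lemma exists_totalComplexity_lt {φ : MulAut (FreeGroup α)} {s t : α × Bool} (hst : s.1 ≠ t.1)
    (hlt : complexity (φ (letter s) * φ (letter t)) < complexity (φ (letter s))) :
    ∃ h ∈ transvectionSubgroup α, totalComplexity (φ * h) < totalComplexity φ := by
  obtain ⟨h, h_mem, h_letter, h_of⟩ := exists_mem_transvectionSubgroup_letter hst
  have lt_self : complexity ((φ * h) (FreeGroup.of s.1)) < complexity (φ (FreeGroup.of s.1)) := by
    rwa [← complexity_apply_letter, ← complexity_apply_letter, MulAut.mul_apply, h_letter, map_mul]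
  refine ⟨h, h_mem, Finset.sum_lt_sum (fun i _ ↦ ?_) ⟨s.1, Finset.mem_univ _, lt_self⟩⟩
  obtain rfl | hi := eq_or_ne i s.1
  · exact lt_self.le
  · rw [MulAut.mul_apply, h_of i hi]

end TotalComplexity

theorem exists_mem_transvectionSubgroup_isNielsenReduced [Finite α] (φ : MulAut (FreeGroup α)) :
    ∃ h ∈ transvectionSubgroup α, IsNielsenReduced (φ * h).toMonoidHom := by
  have := Fintype.ofFinite α
  obtain ⟨_, ⟨h, h_mem, rfl⟩, h_min⟩ := WellFounded.has_min (wellFounded_lt (α := ℕ ×ₗ ℕ))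
    ((fun h ↦ totalComplexity (φ * h)) '' (transvectionSubgroup α : Set (MulAut (FreeGroup α))))
    ⟨_, 1, one_mem _, rfl⟩
  refine ⟨h, h_mem, isNielsenReduced_of_complexity_le (φ * h).injective fun s t hst ↦ ?_⟩
  by_contra! hlt
  obtain ⟨k, k_mem, k_lt⟩ := exists_totalComplexity_lt hst hlt
  exact h_min _ ⟨h * k, mul_mem h_mem k_mem, rfl⟩ (by simpa only [← mul_assoc])

instance [Finite α] : (transvectionSubgroup α).FiniteIndex := by
  have : Finite {φ : MulAut (FreeGroup α) | IsNielsenReduced φ.toMonoidHom} :=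
    finite_setOf_isNielsenReduced
  have surjective : Function.Surjective
      fun φ : {φ : MulAut (FreeGroup α) | IsNielsenReduced φ.toMonoidHom} ↦
        (φ.1 : MulAut (FreeGroup α) ⧸ transvectionSubgroup α) := by
    intro x
    obtain ⟨φ, rfl⟩ := QuotientGroup.mk_surjective x
    obtain ⟨h, h_mem, reduced⟩ := exists_mem_transvectionSubgroup_isNielsenReduced φ
    exact ⟨⟨φ * h, reduced⟩, QuotientGroup.mk_mul_of_mem φ h_mem⟩
  have := Finite.of_surjective _ surjective
  exact Subgroup.finiteIndex_of_finite_quotient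

end Nielsen

instance {α : Type*} [Finite α] : Group.FG (MulAut (FreeGroup α)) := by
  classical
  refine Group.fg_iff.2 ⟨transvections α ∪ {φ | IsNielsenReduced φ.toMonoidHom},
    Subgroup.eq_top_iff' _ |>.2 fun φ ↦ ?_,
    finite_transvections.union finite_setOf_isNielsenReduced⟩
  obtain ⟨h, h_mem, reduced⟩ := exists_mem_transvectionSubgroup_isNielsenReduced φ
  rw [← mul_inv_cancel_right φ h]
  exact mul_mem (Subgroup.subset_closure (Or.inr reduced))
    (inv_mem (Subgroup.closure_mono Set.subset_union_left h_mem))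

section FreeGroupAutomorphisms

variable {α : Type*} [DecidableEq α]

lemma isSteinberg_map_rightMul {Q : Type*} [Group Q] {π : MulAut (FreeGroup α) →* Q}
    (hπ : ∀ i j, i ≠ j → π (leftMul i j) = π (rightMul i j)) :
    IsSteinberg fun i j ↦ π (rightMul j i) := by
  have commute_of_eq {i j k : α} (hji : j ≠ i) (hki : k ≠ i) :
      Commute (π (rightMul i j)) (π (rightMul i k)) := by
    rw [← hπ i k hki.symm]
    exact (commute_rightMul_leftMul hji hki).map π
  constructor
  · intro i j k l hij hkl hjk hil
    obtain rfl | hjl := eq_or_ne j l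
    · exact commute_of_eq hij hkl
    · exact (commute_rightMul_rightMul hjl hil hjk.symm).map π
  · intro i j k hij hjk hik
    have relation := congrArg π (rightMul_mul_rightMul hij hjk hik)
    simp only [map_mul] at relation
    rw [commutatorElement_def, relation, mul_inv_cancel_right, (commute_of_eq hjk hik).eq,
      mul_inv_cancel_right]

variable [Fintype α] {I Γ : Subgroup (MulAut (FreeGroup α))} [I.Normal] [Γ.FiniteIndex]

lemma eq_one_of_mem_normalClosure_partialConj {A : Type*} [CommGroup A] [IsMulTorsionFree A]
    (hα : 3 ≤ Fintype.card α) (hI : ∀ i j, i ≠ j → partialConj i j ∈ I) {f : Γ →* A}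
    (hf : ⁅I, I⁆.subgroupOf Γ ≤ f.ker) {γ : Γ}
    (hγ : (γ : MulAut (FreeGroup α)) ∈
      Subgroup.normalClosure {φ | ∃ i j, i ≠ j ∧ φ = partialConj i j}) : f γ = 1 := by
  refine eq_one_of_mem_normalClosure hf ?_ hγ
  rintro _ ⟨j, k, hjk, rfl⟩
  obtain ⟨i, hij, hik⟩ := exists_ne_ne_of_three_le_card hα j k
  exact ⟨hI j k hjk, partialConj j i, hI j i hij.symm, rightMul i k,
    mul_inv_eq_of_eq_mul (rightMul_mul_partialConj hij hjk hik),
    commute_rightMul_partialConj hij hjk hik⟩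

theorem eq_one_of_mem_transvectionSubgroup (hα : 3 ≤ Fintype.card α)
    (hI : ∀ i j, i ≠ j → partialConj i j ∈ I) {f : Γ →* Multiplicative ℝ}
    (hf : ⁅I, I⁆.subgroupOf Γ ≤ f.ker) {γ : Γ}
    (hγ : (γ : MulAut (FreeGroup α)) ∈ transvectionSubgroup α) : f γ = 1 := by
  let M : Subgroup (MulAut (FreeGroup α)) :=
    Subgroup.normalClosure {φ | ∃ i j, i ≠ j ∧ φ = partialConj i j}
  let π := QuotientGroup.mk' M
  have ker_le : π.ker.subgroupOf Γ ≤ f.ker := fun δ hδ ↦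
    eq_one_of_mem_normalClosure_partialConj hα hI hf (γ := δ) (by rwa [QuotientGroup.ker_mk'] at hδ)
  have map_leftMul (i j : α) (hij : i ≠ j) : π (leftMul i j) = π (rightMul i j) :=
    QuotientGroup.eq.2 (Subgroup.subset_normalClosure ⟨i, j, hij, rfl⟩)
  have finiteIndex : (Γ.map π).FiniteIndex :=
    ⟨ne_zero_of_dvd_ne_zero Subgroup.FiniteIndex.index_ne_zero
      (Subgroup.index_map_dvd Γ (QuotientGroup.mk'_surjective M))⟩
  obtain ⟨f', hf'⟩ := exists_map_eq_of_ker_le π f ker_le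
  rw [← hf']
  refine (isSteinberg_map_rightMul map_leftMul).eq_one_of_mem_closure hα f' ?_
  refine (Subgroup.closure_le (Subgroup.comap π (Subgroup.closure _))).2 ?_ hγ
  rintro _ ⟨i, j, hij, rfl | rfl⟩
  · exact Subgroup.subset_closure ⟨j, i, hij.symm, rfl⟩
  · exact Subgroup.subset_closure ⟨j, i, hij.symm, (map_leftMul i j hij).symm⟩

end FreeGroupAutomorphisms

instance (n : ℕ) : (IA n).Normal where
  conj_mem φ hφ ψ x := by
    have map_eq := congrArg (Abelianization.map ψ.toMonoidHom) (hφ (ψ⁻¹ x))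
    rw [Abelianization.map_of, Abelianization.map_of] at map_eq
    exact map_eq.trans (congrArg Abelianization.of (MulAut.apply_inv_self _ ψ x))

lemma partialConj_mem_IA {n : ℕ} (i j : Fin n) : partialConj i j ∈ IA n := by
  suffices Abelianization.of.comp (partialConj i j).toMonoidHom = Abelianization.of from
    DFunLike.congr_fun this
  refine FreeGroup.ext_hom _ _ fun k ↦ ?_
  change Abelianization.of (partialConj i j (FreeGroup.of k)) = _
  obtain rfl | hki := eq_or_ne k i
  · obtain rfl | hjk := eq_or_ne j k
    · simp [partialConj, rightMul, leftMul]
    · rw [partialConj_of_self hjk, map_mul, map_mul, map_inv, mul_right_comm, inv_mul_cancel,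
        one_mul]
  · rw [partialConj_of_of_ne hki]

end ErshovHe

theorem ershov_he_commutator_contains_general {α : Type*} [DecidableEq α] [Fintype α]
    (hα : 3 ≤ Fintype.card α) (I : Subgroup (MulAut (FreeGroup α))) [I.Normal]
    (hI : ∀ i j, i ≠ j → ErshovHe.partialConj i j ∈ I)
    (Γ : Subgroup (MulAut (FreeGroup α))) [Γ.FiniteIndex]
    (h : ∀ φ : Γ →* Multiplicative ℝ, ⁅I, I⁆.subgroupOf Γ ≤ φ.ker) :
    Finite (Abelianization Γ) ∧ ∀ φ : Γ →* Multiplicative ℝ, φ = 1 := by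
  have eq_one (φ : Γ →* Multiplicative ℝ) : φ = 1 :=
    ErshovHe.eq_one_of_forall_mem_eq_one (ErshovHe.transvectionSubgroup α) fun _ ↦
      ErshovHe.eq_one_of_mem_transvectionSubgroup hα hI (h φ)
  have : Group.FG Γ := Subgroup.fg_of_index_ne_zero Γ
  exact ⟨ErshovHe.finite_abelianization_of_forall_eq_one eq_one, eq_one⟩

/-- Ershov–He.  For `n ≥ 3`, if `Γ` is a finite index subgroup of
`Aut(Fₙ)` whose commutator subgroup `[Γ, Γ]` contains `[IAₙ, IAₙ]`, then `Γ` has finite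
abelianization; in particular every group homomorphism `Γ → (ℝ, +)` is trivial. -/
theorem ershov_he_commutator_contains
    (n : ℕ) (hn : 3 ≤ n)
    (Γ : Subgroup (AutF n)) [Γ.FiniteIndex]
    (h : ⁅IA n, IA n⁆ ≤ ⁅Γ, Γ⁆) :
    Finite (Abelianization Γ) ∧ ∀ φ : Γ →* Multiplicative ℝ, φ = 1 :=
  ershov_he_commutator_contains_general (by simpa using hn) (IA n)
    (fun i j _ ↦ ErshovHe.partialConj_mem_IA i j) Γ
    (ErshovHe.subgroupOf_le_ker_of_le_commutator h)
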